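/- arXiv:1304.5392 — 4 statements merged into one kernel-verified Lean document; each statement's English description precedes it below -/
import Mathlib

section
/- For a nonzero real number r and a positive real t, define H_r(t) = ((√(8 + t^(2r)) + t^r)/4)^(1/r), and define H_0(t) = t^(1/3). Then for real numbers α, β, the double inequality H_α(cos x) < sin(x)/x < H_β(cos x) holds for every x ∈ (0, π/2) if and only if α ≤ 3/5 and β ≥ (ln 2)/(2(ln π − ln 2)). -/
open Real Set

/-- The function `H_r` from the paper. -/
noncomputable def Hfun (r t : ℝ) : ℝ :=
  if r = 0 then t ^ ((1 : ℝ) / 3)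
  else ((Real.sqrt (8 + t ^ (2 * r)) + t ^ r) / 4) ^ (1 / r)

open Filter Topology

namespace HSB

lemma step (f f' : ℝ → ℝ) (hf : ∀ x, HasDerivAt f (f' x) x) (h0 : f 0 = 0)
    (h : ∀ x, 0 ≤ x → 0 ≤ f' x) : ∀ x, 0 ≤ x → 0 ≤ f x := by
  intro x hx
  have hm : MonotoneOn f (Ici 0) := by
    apply monotoneOn_of_deriv_nonneg (convex_Ici 0)
    · exact fun y _ => (hf y).continuousAt.continuousWithinAt
    · exact fun y _ => (hf y).differentiableAt.differentiableWithinAt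
    · intro y hy
      rw [interior_Ici] at hy
      rw [(hf y).deriv]
      exact h y (le_of_lt hy)
  have := hm (mem_Ici.2 le_rfl) (mem_Ici.2 hx) hx
  rwa [h0] at this

/-- Taylor polynomial of `cos` with `n` terms. -/
noncomputable def ct (n : ℕ) (x : ℝ) : ℝ :=
  ∑ i ∈ Finset.range n, (-1) ^ i * x ^ (2 * i) / (Nat.factorial (2 * i) : ℝ)

/-- Taylor polynomial of `sin` with `n` terms. -/
noncomputable def st (n : ℕ) (x : ℝ) : ℝ :=
  ∑ i ∈ Finset.range n, (-1) ^ i * x ^ (2 * i + 1) / (Nat.factorial (2 * i + 1) : ℝ)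

lemma st_deriv (n : ℕ) (x : ℝ) : HasDerivAt (st n) (ct n x) x := by
  unfold st ct
  apply HasDerivAt.fun_sum
  intro i _
  have h := ((hasDerivAt_pow (2 * i + 1) x).const_mul ((-1 : ℝ) ^ i)).div_const
    (Nat.factorial (2 * i + 1) : ℝ)
  refine h.congr_deriv ?_
  rw [Nat.factorial_succ]
  have : (Nat.factorial (2 * i) : ℝ) ≠ 0 := by positivity
  push_cast
  field_simp

lemma ct_deriv (n : ℕ) (x : ℝ) : HasDerivAt (ct (n + 1)) (- st n x) x := by
  unfold st ct
  rw [← Finset.sum_neg_distrib]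
  have h0 : (fun x : ℝ => ∑ i ∈ Finset.range (n + 1),
      (-1 : ℝ) ^ i * x ^ (2 * i) / (Nat.factorial (2 * i) : ℝ)) =
      fun x => (∑ i ∈ Finset.range n,
      (-1 : ℝ) ^ (i + 1) * x ^ (2 * (i + 1)) / (Nat.factorial (2 * (i + 1)) : ℝ)) + 1 := by
    funext x
    rw [Finset.sum_range_succ']
    simp
  show HasDerivAt (fun x : ℝ => ∑ i ∈ Finset.range (n + 1),
      (-1 : ℝ) ^ i * x ^ (2 * i) / (Nat.factorial (2 * i) : ℝ)) _ x
  rw [h0]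
  apply HasDerivAt.add_const
  apply HasDerivAt.fun_sum
  intro i _
  have h := ((hasDerivAt_pow (2 * (i + 1)) x).const_mul ((-1 : ℝ) ^ (i + 1))).div_const
    (Nat.factorial (2 * (i + 1)) : ℝ)
  refine h.congr_deriv ?_
  rw [show 2 * (i + 1) = (2 * i + 1) + 1 by ring, Nat.factorial_succ]
  have : (Nat.factorial (2 * i + 1) : ℝ) ≠ 0 := by positivity
  push_cast
  field_simp
  ring

lemma st_zero (n : ℕ) : st n 0 = 0 := by simp [st]
lemma ct_zero (n : ℕ) : ct (n + 1) 0 = 1 := by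
  unfold ct; rw [Finset.sum_range_succ']; simp

lemma taylor (n : ℕ) : ∀ x : ℝ, 0 ≤ x →
    0 ≤ (-1) ^ n * (ct (n + 1) x - cos x) ∧ 0 ≤ (-1) ^ n * (st (n + 1) x - sin x) := by
  induction n with
  | zero =>
    have h1 : ∀ x : ℝ, 0 ≤ x → 0 ≤ (-1 : ℝ) ^ 0 * (ct (0 + 1) x - cos x) := by
      intro x _
      simp [ct, cos_le_one]
    intro x hx
    refine ⟨h1 x hx, ?_⟩
    refine step (fun x => (-1 : ℝ) ^ 0 * (st (0 + 1) x - sin x)) _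
      (fun x => ((st_deriv _ x).sub (hasDerivAt_sin x)).const_mul _) ?_ h1 x hx
    simp [st_zero]
  | succ n ih =>
    have h1 : ∀ x : ℝ, 0 ≤ x → 0 ≤ (-1 : ℝ) ^ (n + 1) * (ct (n + 1 + 1) x - cos x) := by
      refine step (fun x => (-1 : ℝ) ^ (n + 1) * (ct (n + 1 + 1) x - cos x)) _
        (fun x => ((ct_deriv _ x).sub (hasDerivAt_cos x)).const_mul _) ?_ ?_
      · simp [ct_zero]
      · intro x hx
        have := (ih x hx).2
        calc _ ≤ _ := this
          _ = _ := by ring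
    intro x hx
    refine ⟨h1 x hx, ?_⟩
    refine step (fun x => (-1 : ℝ) ^ (n + 1) * (st (n + 1 + 1) x - sin x)) _
      (fun x => ((st_deriv _ x).sub (hasDerivAt_sin x)).const_mul _) ?_ h1 x hx
    simp [st_zero]

lemma sin_ge7 {x : ℝ} (hx : 0 ≤ x) : x - x^3/6 + x^5/120 - x^7/5040 ≤ sin x := by
  have := (taylor 3 x hx).2
  norm_num [st, Finset.sum_range_succ, Nat.factorial] at this
  linarith
lemma sin_ge11 {x : ℝ} (hx : 0 ≤ x) :
    x - x^3/6 + x^5/120 - x^7/5040 + x^9/362880 - x^11/39916800 ≤ sin x := by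
  have := (taylor 5 x hx).2
  norm_num [st, Finset.sum_range_succ, Nat.factorial] at this
  linarith
lemma sin_ge3 {x : ℝ} (hx : 0 ≤ x) : x - x^3/6 ≤ sin x := by
  have := (taylor 1 x hx).2
  norm_num [st, Finset.sum_range_succ, Nat.factorial] at this
  linarith
lemma sin_le5 {x : ℝ} (hx : 0 ≤ x) : sin x ≤ x - x^3/6 + x^5/120 := by
  have := (taylor 2 x hx).2
  norm_num [st, Finset.sum_range_succ, Nat.factorial] at this
  linarith
lemma sin_le9 {x : ℝ} (hx : 0 ≤ x) :
    sin x ≤ x - x^3/6 + x^5/120 - x^7/5040 + x^9/362880 := by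
  have := (taylor 4 x hx).2
  norm_num [st, Finset.sum_range_succ, Nat.factorial] at this
  linarith
lemma cos_ge2 {x : ℝ} (hx : 0 ≤ x) : 1 - x^2/2 ≤ cos x := by
  have := (taylor 1 x hx).1
  norm_num [ct, Finset.sum_range_succ, Nat.factorial] at this
  linarith
lemma cos_ge6 {x : ℝ} (hx : 0 ≤ x) : 1 - x^2/2 + x^4/24 - x^6/720 ≤ cos x := by
  have := (taylor 3 x hx).1
  norm_num [ct, Finset.sum_range_succ, Nat.factorial] at this
  linarith
lemma cos_ge10 {x : ℝ} (hx : 0 ≤ x) :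
    1 - x^2/2 + x^4/24 - x^6/720 + x^8/40320 - x^10/3628800 ≤ cos x := by
  have := (taylor 5 x hx).1
  norm_num [ct, Finset.sum_range_succ, Nat.factorial] at this
  linarith
lemma cos_le4 {x : ℝ} (hx : 0 ≤ x) : cos x ≤ 1 - x^2/2 + x^4/24 := by
  have := (taylor 2 x hx).1
  norm_num [ct, Finset.sum_range_succ, Nat.factorial] at this
  linarith
lemma cos_le8 {x : ℝ} (hx : 0 ≤ x) :
    cos x ≤ 1 - x^2/2 + x^4/24 - x^6/720 + x^8/40320 := by
  have := (taylor 4 x hx).1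
  norm_num [ct, Finset.sum_range_succ, Nat.factorial] at this
  linarith

lemma sq_lt {y : ℝ} (h0 : 0 < y) (h1 : y < π) : y ^ 2 < 99 / 10 := by
  have : y < 3.1416 := h1.trans pi_lt_d4
  nlinarith

lemma ineq_a {y : ℝ} (h0 : 0 < y) (h1 : y < π) :
    0 < y^2 + 9/4 * (y * sin y) - y^2 * cos y / 4 - 6 + 6 * cos y := by
  have hz := sq_lt h0 h1
  have hs := mul_le_mul_of_nonneg_left (sin_ge11 h0.le) h0.le
  have hc := mul_le_mul_of_nonneg_left (cos_ge10 h0.le) (show 0 ≤ 6 - y^2/4 by linarith)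
  have hp : 0 < y^8 * (1/20160 - y^2/604800 + y^4/79833600) := by
    have : 0 < 1/20160 - y^2/604800 + y^4/79833600 := by nlinarith [sq_nonneg (y^2)]
    positivity
  linarith

lemma ineq_b {y : ℝ} (h0 : 0 < y) (h1 : y < π) :
    0 < y * (1 - cos y) * (1 + 3/40*y^2 + y^4/200)
      - (y - sin y) * (3 + 3/40*y^2 - y^4/200) := by
  have hz := sq_lt h0 h1
  have hz2 : y^4 ≤ 99/10 * y^2 := by nlinarith [sq_nonneg y]
  have hs := mul_le_mul_of_nonneg_left (sin_ge7 h0.le)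
    (show 0 ≤ 3 + 3/40*y^2 - y^4/200 by nlinarith)
  have hc := mul_le_mul_of_nonneg_left (cos_le8 h0.le)
    (show 0 ≤ y * (1 + 3/40*y^2 + y^4/200) by positivity)
  have hp : 0 < y^5 * (1/120 + 41/25200*y^2 - 187/1008000*y^4 + 7/1152000*y^6
      - 1/8064000*y^8) := by
    have e : 0 < 1/120 + 41/25200*y^2 - 187/1008000*y^4 + 7/1152000*y^6
      - 1/8064000*y^8 := by
      have h3 : 0 ≤ y^6 * (99/10 - y^2) := mul_nonneg (by positivity) (by linarith)
      have h4 : 0 ≤ y^6 := by positivity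
      nlinarith [sq_nonneg y]
    positivity
  linarith

lemma ineq_c {y : ℝ} (h0 : 0 < y) (h1 : y < π) :
    (3 + 3/8*y^2 + 7/200*y^4) * (sin y - y/2*(1+cos y))
      < y/2*(1 + 3/40*y^2 + y^4/200)*(1 - cos y) := by
  have hz := sq_lt h0 h1
  have hs := mul_le_mul_of_nonneg_left (sin_le9 h0.le)
    (show 0 ≤ 3 + 3/8*y^2 + 7/200*y^4 by positivity)
  have hc := mul_le_mul_of_nonneg_left (cos_ge6 h0.le)
    (show 0 ≤ y/2 * (2 + 3/10*y^2 + 3/100*y^4) by positivity)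
  have hp : 0 < y^5 * (1/240 + 67/100800*y^2 + 289/1512000*y^4 - 361/24192000*y^6
      - 1/10368000*y^8) := by
    have e : 0 < 1/240 + 67/100800*y^2 + 289/1512000*y^4 - 361/24192000*y^6
      - 1/10368000*y^8 := by
      have h3 : 0 ≤ y^6 * (99/10 - y^2) := mul_nonneg (by positivity) (by linarith)
      have h4 : 0 ≤ y^4 * (99/10 - y^2) := mul_nonneg (by positivity) (by linarith)
      have h5 : 0 ≤ y^4 := by positivity
      nlinarith [sq_nonneg y]
    positivity
  linarith

lemma m_bounds {y : ℝ} (h0 : 0 ≤ y) :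
    y^6/1440 - y^8/20160 ≤ y^2/4 + y * sin y/4 - 1 + cos y ∧
    y^2/4 + y * sin y/4 - 1 + cos y ≤ y^6/1440 - y^8/40320 + y^10/1451520 := by
  have hs := mul_le_mul_of_nonneg_left (sin_ge7 h0) h0
  have hs' := mul_le_mul_of_nonneg_left (sin_le9 h0) h0
  have hc := cos_ge6 h0
  have hc' := cos_le8 h0
  constructor <;> linarith


section dom
variable {x : ℝ}

lemma S_pos (h0 : 0 < x) (h1 : x < π / 2) : 0 < sin x :=
  sin_pos_of_pos_of_lt_pi h0 (by linarith [pi_pos])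
lemma C_pos (h0 : 0 < x) (h1 : x < π / 2) : 0 < cos x :=
  cos_pos_of_mem_Ioo ⟨by linarith, h1⟩
lemma U_pos (h0 : 0 < x) (h1 : x < π / 2) : 0 < sin x - x * cos x := by
  have h := Real.lt_tan h0 h1
  have hc := C_pos h0 h1
  rw [tan_eq_sin_div_cos, lt_div_iff₀ hc] at h
  linarith
lemma V_pos (h0 : 0 < x) (h1 : x < π / 2) : 0 < x - sin x * cos x := by
  have h := Real.sin_lt h0
  have hs := S_pos h0 h1
  nlinarith [cos_le_one x]
lemma m_eq (x : ℝ) : x^2 + x * (sin x * cos x) - 2 * sin x ^ 2 =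
    (2*x)^2/4 + (2*x) * sin (2*x)/4 - 1 + cos (2*x) := by
  rw [sin_two_mul, cos_two_mul, cos_sq']
  ring
lemma m_pos (h0 : 0 < x) (h1 : x < π / 2) :
    0 < x^2 + x * (sin x * cos x) - 2 * sin x ^ 2 := by
  rw [m_eq]
  have h := (m_bounds (y := 2*x) (by linarith)).1
  have hz := sq_lt (y := 2*x) (by linarith) (by linarith)
  have : 0 < (2*x)^6 * (1/1440 - (2*x)^2/20160) := by
    apply mul_pos (by positivity); linarith
  linarith
end dom

/-- auxiliary weight -/
noncomputable def kk (x : ℝ) : ℝ := 1 + 3/10*x^2 + 2/25*x^4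
lemma kk_pos (x : ℝ) : 0 < kk x := by unfold kk; positivity
lemma kk_deriv (x : ℝ) : HasDerivAt kk (3/5*x + 8/25*x^3) x := by
  unfold kk
  have := (((hasDerivAt_pow 2 x).const_mul (3/10)).const_add 1).add
    ((hasDerivAt_pow 4 x).const_mul (2/25 : ℝ))
  refine this.congr_deriv ?_
  norm_num
  ring

lemma SC_deriv (x : ℝ) :
    HasDerivAt (fun x => sin x * cos x) (cos x ^ 2 - sin x ^ 2) x :=
  ((hasDerivAt_sin x).mul (hasDerivAt_cos x)).congr_deriv (by ring)
lemma U_deriv (x : ℝ) : HasDerivAt (fun x => sin x - x * cos x) (x * sin x) x :=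
  ((hasDerivAt_sin x).sub ((hasDerivAt_id x).mul (hasDerivAt_cos x))).congr_deriv
    (by simp)
lemma V_deriv (x : ℝ) : HasDerivAt (fun x => x - sin x * cos x) (2 * sin x ^ 2) x :=
  ((hasDerivAt_id x).sub (SC_deriv x)).congr_deriv (by linarith [sin_sq_add_cos_sq x])
lemma m_deriv (x : ℝ) : HasDerivAt (fun x => x^2 + x * (sin x * cos x) - 2 * sin x ^ 2)
    (2*x - 3 * (sin x * cos x) + x * (cos x ^ 2 - sin x ^ 2)) x :=
  (((hasDerivAt_pow 2 x).add ((hasDerivAt_id x).mul (SC_deriv x))).sub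
    (((hasDerivAt_sin x).pow 2).const_mul 2)).congr_deriv (by simp; ring)

lemma anti_of {f f' : ℝ → ℝ} {a b : ℝ} (hf : ∀ x ∈ Ioo a b, HasDerivAt f (f' x) x)
    (h : ∀ x ∈ Ioo a b, f' x < 0) : StrictAntiOn f (Ioo a b) := by
  apply strictAntiOn_of_deriv_neg (convex_Ioo a b)
  · exact fun y hy => (hf y hy).continuousAt.continuousWithinAt
  · intro y hy
    rw [interior_Ioo] at hy
    rw [(hf y hy).deriv]; exact h y hy
lemma mono_of {f f' : ℝ → ℝ} {a b : ℝ} (hf : ∀ x ∈ Ioo a b, HasDerivAt f (f' x) x)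
    (h : ∀ x ∈ Ioo a b, 0 < f' x) : StrictMonoOn f (Ioo a b) := by
  apply strictMonoOn_of_deriv_pos (convex_Ioo a b)
  · exact fun y hy => (hf y hy).continuousAt.continuousWithinAt
  · intro y hy
    rw [interior_Ioo] at hy
    rw [(hf y hy).deriv]; exact h y hy

noncomputable def A1 (x : ℝ) : ℝ := (x^2 + x * (sin x * cos x) - 2 * sin x ^ 2) / x^6
noncomputable def A2 (x : ℝ) : ℝ := ((x - sin x * cos x) * kk x) / x^3
noncomputable def BB (x : ℝ) : ℝ := (x^3 * kk x * cos x) / (sin x - x * cos x)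

lemma A1_anti : StrictAntiOn A1 (Ioo 0 (π/2)) := by
  apply anti_of (fun x hx => (m_deriv x).div (hasDerivAt_pow 6 x) (by have := hx.1; positivity))
  intro x hx
  have h0 := hx.1
  have ha := ineq_a (y := 2*x) (by linarith) (by linarith [hx.2])
  apply div_neg_of_neg_of_pos _ (by positivity)
  have e : (2*x - 3 * (sin x * cos x) + x * (cos x ^ 2 - sin x ^ 2)) * x^6
    - (x^2 + x * (sin x * cos x) - 2 * sin x ^ 2) * ((6:ℕ) * x^(6-1))
    = - x^5 * ((2*x)^2 + 9/4 * ((2*x) * sin (2*x)) - (2*x)^2 * cos (2*x) / 4 - 6 + 6 * cos (2*x)) := by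
    rw [sin_two_mul, cos_two_mul]
    have : sin x ^ 2 = 1 - cos x ^ 2 := by linarith [sin_sq_add_cos_sq x]
    push_cast
    rw [this]
    ring
  rw [e]
  have : 0 < x^5 := by positivity
  nlinarith [mul_pos this ha]

lemma A2_mono : StrictMonoOn A2 (Ioo 0 (π/2)) := by
  apply mono_of (fun x hx => ((V_deriv x).mul (kk_deriv x)).div (hasDerivAt_pow 3 x)
    (by have := hx.1; positivity))
  intro x hx
  have h0 := hx.1
  have ha := ineq_b (y := 2*x) (by linarith) (by linarith [hx.2])
  apply div_pos _ (by positivity)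
  have e : (2 * sin x ^ 2 * kk x + (x - sin x * cos x) * (3/5*x + 8/25*x^3)) * x^3
    - ((x - sin x * cos x) * kk x) * ((3:ℕ) * x^(3-1))
    = x^2/2 * ((2*x) * (1 - cos (2*x)) * (1 + 3/40*(2*x)^2 + (2*x)^4/200)
      - ((2*x) - sin (2*x)) * (3 + 3/40*(2*x)^2 - (2*x)^4/200)) := by
    rw [sin_two_mul, cos_two_mul]
    have : sin x ^ 2 = 1 - cos x ^ 2 := by linarith [sin_sq_add_cos_sq x]
    push_cast
    rw [this]
    unfold kk
    ring
  simp only [Pi.mul_apply]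
  rw [e]
  positivity

lemma BB_anti : StrictAntiOn BB (Ioo 0 (π/2)) := by
  apply anti_of (fun x hx => (((hasDerivAt_pow 3 x).mul (kk_deriv x)).mul (hasDerivAt_cos x)).div
    (U_deriv x) (U_pos hx.1 hx.2).ne')
  intro x hx
  have h0 := hx.1
  have hU := U_pos hx.1 hx.2
  have ha := ineq_c (y := 2*x) (by linarith) (by linarith [hx.2])
  apply div_neg_of_neg_of_pos _ (by positivity)
  have e : ((((3:ℕ) * x^(3-1)) * kk x + x^3 * (3/5*x + 8/25*x^3)) * cos x
      + (x^3 * kk x) * (- sin x)) * (sin x - x * cos x)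
    - (x^3 * kk x * cos x) * (x * sin x)
    = x^2/2 * ((3 + 3/8*(2*x)^2 + 7/200*(2*x)^4) * (sin (2*x) - (2*x)/2*(1+cos (2*x)))
      - (2*x)/2*(1 + 3/40*(2*x)^2 + (2*x)^4/200)*(1 - cos (2*x))) := by
    have h2 : 1 - cos (2*x) = 2 * sin x ^ 2 := by
      rw [cos_two_mul]; linarith [sin_sq_add_cos_sq x]
    rw [h2, sin_two_mul, cos_two_mul]
    push_cast
    unfold kk
    ring
  simp only [Pi.mul_apply]
  rw [e]
  have : 0 < x^2/2 := by positivity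
  exact mul_neg_of_pos_of_neg this (by linarith)

/-- The quotient `J`. -/
noncomputable def JJ (x : ℝ) : ℝ := A1 x * (BB x / A2 x)

lemma A1_pos {x : ℝ} (hx : x ∈ Ioo 0 (π/2)) : 0 < A1 x :=
  div_pos (m_pos hx.1 hx.2) (by have := hx.1; positivity)
lemma A2_pos {x : ℝ} (hx : x ∈ Ioo 0 (π/2)) : 0 < A2 x :=
  div_pos (mul_pos (V_pos hx.1 hx.2) (kk_pos x)) (by have := hx.1; positivity)
lemma BB_pos {x : ℝ} (hx : x ∈ Ioo 0 (π/2)) : 0 < BB x :=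
  div_pos (mul_pos (mul_pos (by have := hx.1; positivity) (kk_pos x)) (C_pos hx.1 hx.2))
    (U_pos hx.1 hx.2)

lemma JJ_anti : StrictAntiOn JJ (Ioo 0 (π/2)) := by
  intro x hx y hy hxy
  unfold JJ
  have h1 := A1_anti hx hy hxy
  have h2 := A2_mono hx hy hxy
  have h3 := BB_anti hx hy hxy
  have := A1_pos hx
  have := A1_pos hy
  have := A2_pos hx
  have := A2_pos hy
  have := BB_pos hx
  have := BB_pos hy
  gcongr

lemma JJ_eq {x : ℝ} (hx : x ∈ Ioo 0 (π/2)) :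
    JJ x = (x^2 + x * (sin x * cos x) - 2 * sin x ^ 2) * cos x /
      ((sin x - x * cos x) * (x - sin x * cos x)) := by
  unfold JJ A1 A2 BB
  have := (U_pos hx.1 hx.2).ne'
  have := (V_pos hx.1 hx.2).ne'
  have := hx.1.ne'
  have := (kk_pos x).ne'
  field_simp

lemma squeeze {q : ℝ → ℝ} (c K : ℝ)
    (h : ∀ x, 0 < x → x < 1 → |q x - c| ≤ K * x) : Tendsto q (𝓝[>] 0) (𝓝 c) := by
  rw [tendsto_iff_norm_sub_tendsto_zero]
  have h1 : Tendsto (fun x : ℝ => K * x) (𝓝[>] 0) (𝓝 0) := by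
    have : Tendsto (fun x : ℝ => K * x) (𝓝 0) (𝓝 (K * 0)) := (continuous_const.mul continuous_id).tendsto 0
    rw [mul_zero] at this
    exact this.mono_left nhdsWithin_le_nhds
  refine squeeze_zero' (Eventually.of_forall fun x => norm_nonneg _) ?_ h1
  filter_upwards [Ioo_mem_nhdsGT (show (0:ℝ) < 1 by norm_num)] with x hx
  exact h x hx.1 hx.2

lemma lim_m : Tendsto A1 (𝓝[>] 0) (𝓝 (2/45)) := by
  apply squeeze _ 1
  intro x h0 h1
  unfold A1
  rw [m_eq]
  obtain ⟨h2, h3⟩ := m_bounds (y := 2*x) (by linarith)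
  have e8 : x^8 ≤ x^7 := pow_le_pow_of_le_one h0.le h1.le (by norm_num)
  have e10 : x^10 ≤ x^7 := pow_le_pow_of_le_one h0.le h1.le (by norm_num)
  have p8 : 0 < x^8 := by positivity
  have p10 : 0 < x^10 := by positivity
  have p6 : 0 < x^6 := by positivity
  rw [abs_le]
  constructor
  · rw [neg_le_sub_iff_le_add, ← sub_le_iff_le_add, le_div_iff₀ p6]
    ring_nf at *
    linarith
  · rw [sub_le_iff_le_add, div_le_iff₀ p6]
    ring_nf at *
    linarith

lemma lim_V : Tendsto (fun x => (x - sin x * cos x) / x^3) (𝓝[>] 0) (𝓝 (2/3)) := by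
  apply squeeze _ 1
  intro x h0 h1
  have e : x - sin x * cos x = (2*x - sin (2*x))/2 := by rw [sin_two_mul]; ring
  simp only [e]
  have h2 := sin_ge3 (x := 2*x) (by linarith)
  have h3 := sin_le5 (x := 2*x) (by linarith)
  have e5 : x^5 ≤ x^4 := pow_le_pow_of_le_one h0.le h1.le (by norm_num)
  have p5 : 0 < x^5 := by positivity
  have p3 : 0 < x^3 := by positivity
  rw [abs_le]
  constructor
  · rw [neg_le_sub_iff_le_add, ← sub_le_iff_le_add, le_div_iff₀ p3]
    ring_nf at *
    linarith
  · rw [sub_le_iff_le_add, div_le_iff₀ p3]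
    ring_nf at *
    linarith

lemma lim_U : Tendsto (fun x => (sin x - x * cos x) / x^3) (𝓝[>] 0) (𝓝 (1/3)) := by
  apply squeeze _ 1
  intro x h0 h1
  have h2 := sin_ge3 (x := x) h0.le
  have h3 := sin_le5 (x := x) h0.le
  have h4 := mul_le_mul_of_nonneg_left (cos_ge2 (x := x) h0.le) h0.le
  have h5 := mul_le_mul_of_nonneg_left (cos_le4 (x := x) h0.le) h0.le
  have e5 : x^5 ≤ x^4 := pow_le_pow_of_le_one h0.le h1.le (by norm_num)
  have p5 : 0 < x^5 := by positivity
  have p3 : 0 < x^3 := by positivity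
  rw [abs_le]
  constructor
  · rw [neg_le_sub_iff_le_add, ← sub_le_iff_le_add, le_div_iff₀ p3]
    ring_nf at *
    linarith
  · rw [sub_le_iff_le_add, div_le_iff₀ p3]
    ring_nf at *
    linarith

lemma lim_S : Tendsto (fun x => sin x / x) (𝓝[>] 0) (𝓝 1) := by
  apply squeeze _ 1
  intro x h0 h1
  have h2 := sin_ge3 (x := x) h0.le
  have h3 := Real.sin_lt h0
  have e5 : x^3 ≤ x^2 := pow_le_pow_of_le_one h0.le h1.le (by norm_num)
  have p3 : 0 < x^3 := by positivity
  have p2 : 0 < x^2 := by positivity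
  rw [abs_le]
  constructor
  · rw [neg_le_sub_iff_le_add, ← sub_le_iff_le_add, le_div_iff₀ h0]
    ring_nf at *
    linarith
  · rw [sub_le_iff_le_add, div_le_iff₀ h0]
    ring_nf at *
    linarith

lemma lim_C : Tendsto (fun x => cos x) (𝓝[>] 0) (𝓝 1) := by
  have := (continuous_cos.tendsto 0).mono_left (nhdsWithin_le_nhds (s := Ioi 0))
  rwa [cos_zero] at this

lemma lim_k : Tendsto kk (𝓝[>] 0) (𝓝 1) := by
  have hc : Continuous kk := by unfold kk; fun_prop
  have := (hc.tendsto 0).mono_left (nhdsWithin_le_nhds (s := Ioi 0))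
  rwa [show kk 0 = 1 by simp [kk]] at this

lemma dom_ev : ∀ᶠ x in 𝓝[>] (0:ℝ), x ∈ Ioo 0 (π/2) :=
  Ioo_mem_nhdsGT (by positivity)

lemma lim_J : Tendsto JJ (𝓝[>] 0) (𝓝 (1/5)) := by
  have h : Tendsto (fun x => A1 x * ((kk x * cos x / ((sin x - x * cos x) / x^3)) /
      ((x - sin x * cos x) / x^3 * kk x))) (𝓝[>] 0) (𝓝 (2/45 * ((1 * 1 / (1/3)) / (2/3 * 1)))) :=
    lim_m.mul (((lim_k.mul lim_C).div lim_U (by norm_num)).div (lim_V.mul lim_k) (by norm_num))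
  norm_num at h
  refine (h.congr' ?_)
  filter_upwards [dom_ev] with x hx
  unfold JJ BB A2
  have := (U_pos hx.1 hx.2).ne'
  have := (V_pos hx.1 hx.2).ne'
  have := hx.1.ne'
  have := (kk_pos x).ne'
  field_simp

lemma lt_of_mono {f : ℝ → ℝ} {b L : ℝ} (hf : StrictMonoOn f (Ioo 0 b))
    (hl : Tendsto f (𝓝[>] 0) (𝓝 L)) {x : ℝ} (hx : x ∈ Ioo 0 b) : L < f x := by
  have hx2 : x/2 ∈ Ioo 0 b := ⟨by linarith [hx.1], by linarith [hx.1, hx.2]⟩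
  have h1 : f (x/2) < f x := hf hx2 hx (by linarith [hx.1])
  refine lt_of_le_of_lt (le_of_tendsto hl ?_) h1
  filter_upwards [Ioo_mem_nhdsGT hx2.1] with y hy
  exact (hf ⟨hy.1, hy.2.trans hx2.2⟩ hx2 hy.2).le

lemma lt_of_anti {f : ℝ → ℝ} {b L : ℝ} (hf : StrictAntiOn f (Ioo 0 b))
    (hl : Tendsto f (𝓝[>] 0) (𝓝 L)) {x : ℝ} (hx : x ∈ Ioo 0 b) : f x < L := by
  have := lt_of_mono (f := fun x => - f x) (fun a ha b hb hab => neg_lt_neg (hf ha hb hab)) hl.neg hx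
  linarith

lemma J_lt {x : ℝ} (hx : x ∈ Ioo 0 (π/2)) : JJ x < 1/5 := lt_of_anti JJ_anti lim_J hx

lemma wilker {x : ℝ} (hx : x ∈ Ioo 0 (π/2)) :
    0 < x * sin x + cos x * sin x ^ 2 - 2 * x^2 * cos x := by
  have h := J_lt hx
  have hp := mul_pos (U_pos hx.1 hx.2) (V_pos hx.1 hx.2)
  rw [JJ_eq hx, div_lt_iff₀ hp] at h
  nlinarith

/-- `κ` -/
noncomputable def kap (x : ℝ) : ℝ := (x - sin x * cos x) / (x * sin x ^ 2)

lemma kap_mono : StrictMonoOn kap (Ioo 0 (π/2)) := by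
  apply mono_of (fun x hx => (V_deriv x).div ((hasDerivAt_id x).mul ((hasDerivAt_sin x).pow 2))
    (by have := hx.1; have := S_pos hx.1 hx.2; simp; constructor <;> positivity))
  intro x hx
  have h0 := hx.1
  have hs := S_pos hx.1 hx.2
  apply div_pos
  · have := mul_pos hs (wilker hx)
    simp
    have h2 : sin x ^ 2 = 1 - cos x ^ 2 := by linarith [sin_sq_add_cos_sq x]
    have e : 2 * sin x ^ 2 * (x * sin x ^ 2) - (x - sin x * cos x) * (sin x ^ 2 + x * (2 * sin x * cos x))
      = sin x * (x * sin x + cos x * sin x ^ 2 - 2 * x^2 * cos x)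
       + 2 * x * sin x ^ 2 * (sin x ^ 2 - (1 - cos x ^ 2)) := by ring
    rw [← h2, sub_self, mul_zero] at e
    linarith
  · simp; positivity

lemma lim_kap : Tendsto kap (𝓝[>] 0) (𝓝 (2/3)) := by
  have h := lim_V.div (lim_S.pow 2) (by norm_num)
  norm_num at h
  refine h.congr' ?_
  filter_upwards [dom_ev] with x hx
  unfold kap
  have := hx.1.ne'
  have := (S_pos hx.1 hx.2).ne'
  simp
  field_simp

lemma kap_lt {x : ℝ} (hx : x ∈ Ioo 0 (π/2)) : kap x < 2 := by
  unfold kap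
  have h0 := hx.1
  have hs := S_pos hx.1 hx.2
  have hc := C_pos hx.1 hx.2
  rw [div_lt_iff₀ (by positivity)]
  -- sin x cos x > x cos 2x
  have hU := mul_pos hc (U_pos hx.1 hx.2)
  have h2 : sin x ^ 2 = 1 - cos x ^ 2 := by linarith [sin_sq_add_cos_sq x]
  have hcs : cos x ^ 2 ≤ 1 := cos_sq_le_one x
  nlinarith [mul_nonneg h0.le (sub_nonneg.2 hcs)]

noncomputable def rho (x : ℝ) : ℝ := (1 - JJ x) / (2 - kap x)

lemma rho_mono : StrictMonoOn rho (Ioo 0 (π/2)) := by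
  intro x hx y hy hxy
  unfold rho
  have h1 := JJ_anti hx hy hxy
  have h2 := kap_mono hx hy hxy
  have h3 := kap_lt hx
  have h4 := kap_lt hy
  have h5 := J_lt hx
  have h6 := J_lt hy
  apply div_lt_div₀ <;> linarith

lemma lim_rho : Tendsto rho (𝓝[>] 0) (𝓝 (3/5)) := by
  have h := (lim_J.const_sub 1).div (lim_kap.const_sub 2) (by norm_num)
  norm_num at h
  exact h

lemma rho_gt {x : ℝ} (hx : x ∈ Ioo 0 (π/2)) : 3/5 < rho x := lt_of_mono rho_mono lim_rho hx


noncomputable def lb (x : ℝ) : ℝ := log (sin x) + log (cos x) - log x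
noncomputable def la (x : ℝ) : ℝ := 2 * (log (sin x) - log x)
noncomputable def phi (r x : ℝ) : ℝ := log (1 + exp (r * lb x)) - r * la x - log 2
noncomputable def psi (r x : ℝ) : ℝ :=
  log (2 * cos x * (sin x - x * cos x) / (x - sin x * cos x)) - r * lb x

lemma lb_deriv {x : ℝ} (hx : x ∈ Ioo 0 (π/2)) :
    HasDerivAt lb (cos x / sin x + (- sin x) / cos x - 1 / x) x :=
  (((hasDerivAt_sin x).log (S_pos hx.1 hx.2).ne').add
    ((hasDerivAt_cos x).log (C_pos hx.1 hx.2).ne')).sub ((hasDerivAt_id x).log hx.1.ne')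

lemma la_deriv {x : ℝ} (hx : x ∈ Ioo 0 (π/2)) :
    HasDerivAt la (2 * (cos x / sin x - 1 / x)) x :=
  (((hasDerivAt_sin x).log (S_pos hx.1 hx.2).ne').sub
    ((hasDerivAt_id x).log hx.1.ne')).const_mul 2

lemma T_pos {x : ℝ} (hx : x ∈ Ioo 0 (π/2)) :
    0 < 2 * cos x * (sin x - x * cos x) / (x - sin x * cos x) :=
  div_pos (mul_pos (mul_pos two_pos (C_pos hx.1 hx.2)) (U_pos hx.1 hx.2)) (V_pos hx.1 hx.2)

lemma phi_deriv (r : ℝ) {x : ℝ} (hx : x ∈ Ioo 0 (π/2)) :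
    HasDerivAt (phi r) (r * ((x - sin x * cos x) / (x * sin x * cos x) / (1 + exp (r * lb x)) *
      (exp (psi r x + r * lb x) - exp (r * lb x)))) x := by
  have h1 : (1 + exp (r * lb x)) ≠ 0 := by positivity
  have h := ((((lb_deriv hx).const_mul r).exp.const_add 1).log h1).sub
    ((la_deriv hx).const_mul r) |>.sub_const (log 2)
  refine h.congr_deriv ?_
  have hT : exp (psi r x + r * lb x) =
      2 * cos x * (sin x - x * cos x) / (x - sin x * cos x) := by
    unfold psi
    rw [sub_add_cancel, exp_log (T_pos hx)]
  rw [hT]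
  have := (V_pos hx.1 hx.2).ne'
  have := (S_pos hx.1 hx.2).ne'
  have := (C_pos hx.1 hx.2).ne'
  have := hx.1.ne'
  generalize exp (r * lb x) = E at *
  have hfac : ∀ V W : ℝ, V ≠ 0 → V / (x * sin x * cos x) / (1 + E) * (W / V - E) =
      (W - E * V) / (x * sin x * cos x * (1 + E)) := by
    intro V W hV
    field_simp
  rw [hfac _ _ (V_pos hx.1 hx.2).ne']
  field_simp
  linear_combination (-r * E * x) * sin_sq_add_cos_sq x

lemma psi_deriv (r : ℝ) {x : ℝ} (hx : x ∈ Ioo 0 (π/2)) :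
    HasDerivAt (psi r) ((sin x / cos x + (sin x - x * cos x) / (x * sin x)) * (r - rho x)) x := by
  have hV := (V_pos hx.1 hx.2).ne'
  have hU := (U_pos hx.1 hx.2).ne'
  have hS := (S_pos hx.1 hx.2).ne'
  have hC := (C_pos hx.1 hx.2).ne'
  have h0 := hx.1.ne'
  have h := (((((hasDerivAt_cos x).const_mul 2).mul (U_deriv x)).div (V_deriv x) hV).log
    (T_pos hx).ne').sub ((lb_deriv hx).const_mul r)
  refine h.congr_deriv ?_
  simp only [Pi.mul_apply, Pi.div_apply]
  have hk := kap_lt hx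
  unfold kap at hk
  rw [div_lt_iff₀ (mul_pos hx.1 (pow_pos (S_pos hx.1 hx.2) 2))] at hk
  have hW : 2 * x * sin x ^ 2 - (x - sin x * cos x) ≠ 0 := by linarith
  have h2k : 2 - kap x = (2 * x * sin x ^ 2 - (x - sin x * cos x)) / (x * sin x ^ 2) := by
    unfold kap
    field_simp
  have hP : sin x / cos x + (sin x - x * cos x) / (x * sin x) =
      (2 * x * sin x ^ 2 - (x - sin x * cos x)) / (x * sin x * cos x) := by
    field_simp
    linear_combination (-x) * sin_sq_add_cos_sq x
  have hQ : cos x / sin x + (- sin x) / cos x - 1 / x = -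
      ((2 * x * sin x ^ 2 - (x - sin x * cos x)) / (x * sin x * cos x)) := by
    rw [← hP]
    field_simp
    ring
  have hR : (sin x / cos x + (sin x - x * cos x) / (x * sin x)) * rho x =
      (x * sin x + cos x * sin x ^ 2 - 2 * x^2 * cos x) * sin x /
       (cos x * (sin x - x * cos x) * (x - sin x * cos x)) := by
    rw [hP, rho, h2k, JJ_eq hx]
    field_simp
    ring
  rw [mul_sub (sin x / cos x + (sin x - x * cos x) / (x * sin x)), hR, hQ, hP]
  have hL : (((2 * -sin x * (sin x - x * cos x) + 2 * cos x * (x * sin x)) * (x - sin x * cos x)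
      - 2 * cos x * (sin x - x * cos x) * (2 * sin x ^ 2)) / (x - sin x * cos x) ^ 2) /
      (2 * cos x * (sin x - x * cos x) / (x - sin x * cos x)) = -
      ((x * sin x + cos x * sin x ^ 2 - 2 * x^2 * cos x) * sin x /
       (cos x * (sin x - x * cos x) * (x - sin x * cos x))) := by
    field_simp
    ring
  rw [hL]
  ring

lemma lim_lb : Tendsto lb (𝓝[>] 0) (𝓝 0) := by
  have h := (lim_S.log (by norm_num)).add (lim_C.log (by norm_num))
  simp only [log_one, add_zero] at h
  refine h.congr' ?_
  filter_upwards [dom_ev] with x hx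
  rw [log_div (S_pos hx.1 hx.2).ne' hx.1.ne']
  unfold lb; ring

lemma lim_la : Tendsto la (𝓝[>] 0) (𝓝 0) := by
  have h := (lim_S.log (by norm_num)).const_mul 2
  simp only [log_one, mul_zero] at h
  refine h.congr' ?_
  filter_upwards [dom_ev] with x hx
  rw [log_div (S_pos hx.1 hx.2).ne' hx.1.ne']
  unfold la; ring

lemma lim_phi (r : ℝ) : Tendsto (phi r) (𝓝[>] 0) (𝓝 0) := by
  have h1 : Tendsto (fun x => 1 + exp (r * lb x)) (𝓝[>] 0) (𝓝 (1 + exp (r * 0))) :=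
    ((Real.continuous_exp.tendsto _).comp (lim_lb.const_mul r)).const_add 1
  have h := ((h1.log (by positivity)).sub (lim_la.const_mul r)).sub_const (log 2)
  norm_num at h
  exact h

lemma lim_psi (r : ℝ) : Tendsto (psi r) (𝓝[>] 0) (𝓝 0) := by
  have h1 : Tendsto (fun x => 2 * cos x * ((sin x - x * cos x) / x^3) /
      ((x - sin x * cos x) / x^3)) (𝓝[>] 0) (𝓝 (2 * 1 * (1/3) / (2/3))) :=
    ((lim_C.const_mul 2).mul lim_U).div lim_V (by norm_num)
  have h2 : Tendsto (fun x => 2 * cos x * (sin x - x * cos x) / (x - sin x * cos x))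
      (𝓝[>] 0) (𝓝 1) := by
    norm_num at h1
    refine h1.congr' ?_
    filter_upwards [dom_ev] with x hx
    have hV := (V_pos hx.1 hx.2).ne'
    have h0 := hx.1.ne'
    field_simp
  have h := (h2.log (by norm_num)).sub (lim_lb.const_mul r)
  norm_num at h
  exact h

lemma P_pos {x : ℝ} (hx : x ∈ Ioo 0 (π/2)) :
    0 < sin x / cos x + (sin x - x * cos x) / (x * sin x) := by
  have hU := (U_pos hx.1 hx.2)
  have hS := (S_pos hx.1 hx.2)
  have hC := (C_pos hx.1 hx.2)
  have h0 := hx.1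
  positivity

lemma phi_fac {r : ℝ} (hr : 0 < r) {x : ℝ} (hx : x ∈ Ioo 0 (π/2)) :
    0 < r * ((x - sin x * cos x) / (x * sin x * cos x) / (1 + exp (r * lb x))) := by
  have hV := (V_pos hx.1 hx.2)
  have hS := (S_pos hx.1 hx.2)
  have hC := (C_pos hx.1 hx.2)
  have h0 := hx.1
  positivity

lemma phi_deriv_pos {r : ℝ} (hr : 0 < r) {x : ℝ} (hx : x ∈ Ioo 0 (π/2)) (h : 0 < psi r x) :
    0 < (r * ((x - sin x * cos x) / (x * sin x * cos x) / (1 + exp (r * lb x)) *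
      (exp (psi r x + r * lb x) - exp (r * lb x)))) := by
  rw [← mul_assoc]
  apply mul_pos (phi_fac hr hx)
  rw [sub_pos, exp_lt_exp]; linarith

lemma phi_deriv_neg {r : ℝ} (hr : 0 < r) {x : ℝ} (hx : x ∈ Ioo 0 (π/2)) (h : psi r x < 0) :
    (r * ((x - sin x * cos x) / (x * sin x * cos x) / (1 + exp (r * lb x)) *
      (exp (psi r x + r * lb x) - exp (r * lb x)))) < 0 := by
  rw [← mul_assoc]
  apply mul_neg_of_pos_of_neg (phi_fac hr hx)
  rw [sub_neg, exp_lt_exp]; linarith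

lemma psi_pos_of {r b x : ℝ} (hb : b ≤ π/2) (h : ∀ y ∈ Ioo 0 b, rho y < r) (hx : x ∈ Ioo 0 b) :
    0 < psi r x := by
  have hm : StrictMonoOn (psi r) (Ioo 0 b) :=
    mono_of (fun y hy => psi_deriv r ⟨hy.1, hy.2.trans_le hb⟩)
      (fun y hy => mul_pos (P_pos ⟨hy.1, hy.2.trans_le hb⟩) (sub_pos.2 (h y hy)))
  exact lt_of_mono hm (lim_psi r) hx

lemma phi_pos_of {r b x : ℝ} (hr : 0 < r) (hb : b ≤ π/2) (h : ∀ y ∈ Ioo 0 b, 0 < psi r y)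
    (hx : x ∈ Ioo 0 b) : 0 < phi r x := by
  have hm : StrictMonoOn (phi r) (Ioo 0 b) :=
    mono_of (fun y hy => phi_deriv r ⟨hy.1, hy.2.trans_le hb⟩)
      (fun y hy => phi_deriv_pos hr ⟨hy.1, hy.2.trans_le hb⟩ (h y hy))
  exact lt_of_mono hm (lim_phi r) hx

lemma phi_neg {r x : ℝ} (hr : 0 < r) (hr2 : r ≤ 3/5) (hx : x ∈ Ioo 0 (π/2)) : phi r x < 0 := by
  have h1 : StrictAntiOn (psi r) (Ioo 0 (π/2)) :=
    anti_of (fun y hy => psi_deriv r hy)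
      (fun y hy => mul_neg_of_pos_of_neg (P_pos hy) (by linarith [rho_gt hy]))
  have h2 : StrictAntiOn (phi r) (Ioo 0 (π/2)) :=
    anti_of (fun y hy => phi_deriv r hy)
      (fun y hy => phi_deriv_neg hr hy (lt_of_anti h1 (lim_psi r) hy))
  exact lt_of_anti h2 (lim_phi r) hx

lemma phi_pos_exists {r : ℝ} (hr : 3/5 < r) : ∃ x ∈ Ioo 0 (π/2), 0 < phi r x := by
  have h := lim_rho.eventually (gt_mem_nhds hr)
  obtain ⟨x, hx, hxr⟩ := (dom_ev.and h).exists
  have h1 : ∀ y ∈ Ioo 0 x, 0 < psi r y := fun y hy =>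
    psi_pos_of hx.2.le (fun z hz => (rho_mono ⟨hz.1, hz.2.trans hx.2⟩ hx hz.2).trans hxr) hy
  have hx2 : x/2 ∈ Ioo 0 x := ⟨by linarith [hx.1], by linarith [hx.1]⟩
  exact ⟨x/2, ⟨hx2.1, hx2.2.trans hx.2⟩, phi_pos_of (by linarith) hx.2.le h1 hx2⟩

lemma phi_pos {r : ℝ} (hr : 0 < r) (hl : Tendsto (phi r) (𝓝[<] (π/2)) (𝓝 0)) {x : ℝ}
    (hx : x ∈ Ioo 0 (π/2)) : 0 < phi r x := by
  -- either psi is positive on (0, x], or phi is strictly decreasing on (x, π/2)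
  have key : ∀ x0 ∈ Ioo 0 (π/2), rho x0 ≤ r → ∀ y ∈ Ioo 0 x0, 0 < psi r y := by
    intro x0 hx0 h y hy
    exact psi_pos_of hx0.2.le (fun z hz => (rho_mono ⟨hz.1, hz.2.trans hx0.2⟩ hx0 hz.2).trans_le h) hy
  -- main dichotomy at the point w
  have main : ∀ w ∈ Ioo 0 (π/2), (∀ y ∈ Ioo 0 w, 0 < psi r y) ∨ (∀ y ∈ Ioo w (π/2), psi r y < 0) := by
    intro w hw
    by_cases h : rho w ≤ r
    · exact Or.inl (key w hw h)
    push Not at h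
    have anti : ∀ v ∈ Ioo 0 (π/2), r < rho v → StrictAntiOn (psi r) (Ico v (π/2)) := by
      intro v hv hrv
      apply strictAntiOn_of_deriv_neg (convex_Ico _ _)
      · exact fun y hy => (psi_deriv r ⟨hv.1.trans_le hy.1, hy.2⟩).continuousAt.continuousWithinAt
      · intro y hy
        rw [interior_Ico] at hy
        have hy' : y ∈ Ioo 0 (π/2) := ⟨hv.1.trans hy.1, hy.2⟩
        rw [(psi_deriv r hy').deriv]
        exact mul_neg_of_pos_of_neg (P_pos hy') (by linarith [rho_mono hv hy' hy.1])
    by_cases h2 : psi r w ≤ 0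
    · right
      intro y hy
      exact (anti w hw h ⟨le_rfl, hw.2⟩ ⟨hy.1.le, hy.2⟩ hy.1).trans_le h2
    · left
      push Not at h2
      intro y hy
      have hy' : y ∈ Ioo 0 (π/2) := ⟨hy.1, hy.2.trans hw.2⟩
      by_cases h3 : r < rho y
      · exact h2.trans (anti y hy' h3 ⟨le_rfl, hy'.2⟩ ⟨hy.2.le, hw.2⟩ hy.2)
      · push Not at h3
        by_contra hcon
        push Not at hcon
        -- psi is increasing up to y, so positive at y by continuity of the argument
        have hm : StrictMonoOn (psi r) (Ioc 0 y) := by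
          apply strictMonoOn_of_deriv_pos (convex_Ioc _ _)
          · exact fun z hz => (psi_deriv r ⟨hz.1, hz.2.trans_lt hy'.2⟩).continuousAt.continuousWithinAt
          · intro z hz
            rw [interior_Ioc] at hz
            have hz' : z ∈ Ioo 0 (π/2) := ⟨hz.1, hz.2.trans hy'.2⟩
            rw [(psi_deriv r hz').deriv]
            exact mul_pos (P_pos hz') (by linarith [rho_mono hz' hy' hz.2])
        have h4 := key y hy' h3 (y/2) ⟨by linarith [hy.1], by linarith [hy.1]⟩
        have h5 := hm ⟨by linarith [hy.1], by linarith [hy.1]⟩ ⟨hy.1, le_rfl⟩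
          (show y/2 < y by linarith [hy.1])
        linarith
  by_cases hex : ∃ w ∈ Ioo x (π/2), ∀ y ∈ Ioo 0 w, 0 < psi r y
  · obtain ⟨w, hw, hpos⟩ := hex
    exact phi_pos_of hr hw.2.le hpos ⟨hx.1, hw.1⟩
  · push Not at hex
    have hneg : ∀ y ∈ Ioo x (π/2), psi r y < 0 := by
      intro y hy
      have hw : (x + y)/2 ∈ Ioo x (π/2) := ⟨by linarith [hy.1], by linarith [hy.1, hy.2]⟩
      rcases main ((x+y)/2) ⟨hx.1.trans hw.1, hw.2⟩ with h | h
      · obtain ⟨z, hz, hz2⟩ := hex _ hw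
        exact absurd (h z hz) (not_lt.2 hz2)
      · exact h y ⟨by linarith [hy.1], hy.2⟩
    have hanti : StrictAntiOn (phi r) (Ico x (π/2)) := by
      apply strictAntiOn_of_deriv_neg (convex_Ico _ _)
      · exact fun y hy => (phi_deriv r ⟨hx.1.trans_le hy.1, hy.2⟩).continuousAt.continuousWithinAt
      · intro y hy
        rw [interior_Ico] at hy
        have hy' : y ∈ Ioo 0 (π/2) := ⟨hx.1.trans hy.1, hy.2⟩
        rw [(phi_deriv r hy').deriv]
        exact phi_deriv_neg hr hy' (hneg y hy)
    obtain ⟨w, hw1, hw2⟩ := exists_between hx.2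
    have h1 : phi r w < phi r x := hanti ⟨le_rfl, hx.2⟩ ⟨hw1.le, hw2⟩ hw1
    refine lt_of_le_of_lt (le_of_tendsto hl ?_) h1
    filter_upwards [Ioo_mem_nhdsLT hw2] with y hy
    exact (hanti ⟨hw1.le, hw2⟩ ⟨(hw1.trans hy.1).le, hy.2⟩ hy.1).le


lemma exp_lb (r : ℝ) {x : ℝ} (hx : x ∈ Ioo 0 (π/2)) :
    exp (r * lb x) = cos x ^ r * (sin x / x) ^ r := by
  have hS := S_pos hx.1 hx.2
  have hC := C_pos hx.1 hx.2
  rw [rpow_def_of_pos hC, rpow_def_of_pos (div_pos hS hx.1), ← exp_add,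
    log_div hS.ne' hx.1.ne']
  unfold lb; congr 1; ring

lemma exp_la (r : ℝ) {x : ℝ} (hx : x ∈ Ioo 0 (π/2)) :
    exp (r * la x) = (sin x / x) ^ r * (sin x / x) ^ r := by
  have hS := S_pos hx.1 hx.2
  rw [rpow_def_of_pos (div_pos hS hx.1), ← exp_add, log_div hS.ne' hx.1.ne']
  unfold la; congr 1; ring

lemma phi_eq (r x : ℝ) : phi r x = log (1 + exp (r * lb x)) - log (2 * exp (r * la x)) := by
  rw [log_mul two_ne_zero (exp_pos _).ne', log_exp]; unfold phi; ring

lemma phi_pos_iff (r x : ℝ) : 0 < phi r x ↔ 2 * exp (r * la x) < 1 + exp (r * lb x) := by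
  rw [phi_eq, sub_pos, log_lt_log_iff (by positivity) (by positivity)]
lemma phi_neg_iff (r x : ℝ) : phi r x < 0 ↔ 1 + exp (r * lb x) < 2 * exp (r * la x) := by
  rw [phi_eq, sub_neg, log_lt_log_iff (by positivity) (by positivity)]

noncomputable def hh (c : ℝ) : ℝ := (√(8 + c ^ 2) + c) / 4

lemma hh_pos {c : ℝ} (hc : 0 < c) : 0 < hh c := by unfold hh; positivity
lemma hh_eq (c : ℝ) : 2 * hh c ^ 2 = 1 + c * hh c := by
  have := Real.sq_sqrt (show 0 ≤ 8 + c^2 by positivity)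
  unfold hh
  linear_combination this / 8
lemma hh_fac {c : ℝ} (hc : 0 < c) {u : ℝ} (hu : 0 < u) :
    ∃ k > 0, 2 * (u * u) - (1 + c * u) = (u - hh c) * k := by
  have h1 := hh_pos hc
  have h2 := hh_eq c
  refine ⟨2 * (u + hh c) - c, ?_, by linear_combination h2⟩
  have : 0 < 2 * hh c - c := by
    by_contra hcon
    push Not at hcon
    nlinarith
  linarith
lemma hh_lt {c : ℝ} (hc : 0 < c) {u : ℝ} (hu : 0 < u) : hh c < u ↔ 1 + c * u < 2 * (u * u) := by
  obtain ⟨k, hk, e⟩ := hh_fac hc hu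
  rw [← sub_pos, ← sub_pos (a := 2 * (u * u)), e, mul_pos_iff_of_pos_right hk]
lemma lt_hh {c : ℝ} (hc : 0 < c) {u : ℝ} (hu : 0 < u) : u < hh c ↔ 2 * (u * u) < 1 + c * u := by
  obtain ⟨k, hk, e⟩ := hh_fac hc hu
  rw [← sub_neg, ← sub_neg (a := 2 * (u * u)), e]
  constructor
  · intro h; exact mul_neg_of_neg_of_pos h hk
  · intro h; by_contra hcon; push Not at hcon; nlinarith

lemma Hfun_eq {r t : ℝ} (hr : r ≠ 0) (ht : 0 < t) : Hfun r t = (hh (t ^ r)) ^ r⁻¹ := by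
  unfold Hfun hh
  rw [if_neg hr, one_div, mul_comm 2 r, rpow_mul ht.le]
  norm_num

section conv
variable {r x : ℝ}

lemma H_lt_iff (hr : 0 < r) (hx : x ∈ Ioo 0 (π/2)) :
    Hfun r (cos x) < sin x / x ↔ phi r x < 0 := by
  have hS := S_pos hx.1 hx.2
  have hC := C_pos hx.1 hx.2
  have hy := div_pos hS hx.1
  have hc := rpow_pos_of_pos hC r
  rw [Hfun_eq hr.ne' hC, rpow_inv_lt_iff_of_pos (hh_pos hc).le hy.le hr,
    hh_lt hc (rpow_pos_of_pos hy r), phi_neg_iff, exp_la r hx, exp_lb r hx]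

lemma lt_H_iff (hr : 0 < r) (hx : x ∈ Ioo 0 (π/2)) :
    sin x / x < Hfun r (cos x) ↔ 0 < phi r x := by
  have hS := S_pos hx.1 hx.2
  have hC := C_pos hx.1 hx.2
  have hy := div_pos hS hx.1
  have hc := rpow_pos_of_pos hC r
  rw [Hfun_eq hr.ne' hC, lt_rpow_inv_iff_of_pos hy.le (hh_pos hc).le hr,
    lt_hh hc (rpow_pos_of_pos hy r), phi_pos_iff, exp_la r hx, exp_lb r hx]

lemma H_lt_iff_neg (hr : r < 0) (hx : x ∈ Ioo 0 (π/2)) :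
    Hfun r (cos x) < sin x / x ↔ 0 < phi r x := by
  have hS := S_pos hx.1 hx.2
  have hC := C_pos hx.1 hx.2
  have hy := div_pos hS hx.1
  have hc := rpow_pos_of_pos hC r
  rw [Hfun_eq hr.ne hC, rpow_inv_lt_iff_of_neg (hh_pos hc) hy hr,
    lt_hh hc (rpow_pos_of_pos hy r), phi_pos_iff, exp_la r hx, exp_lb r hx]

lemma amgm (s : ℝ) : 2 * exp (s / 2) ≤ 1 + exp s := by
  have : exp s = exp (s/2) * exp (s/2) := by rw [← exp_add]; congr 1; ring
  nlinarith [sq_nonneg (exp (s/2) - 1)]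

lemma la_gt (hx : x ∈ Ioo 0 (π/2)) : lb x / 2 < la x := by
  have h := (phi_neg_iff _ _).1 (phi_neg (r := 3/5) (by norm_num) le_rfl hx)
  have h2 := amgm (3/5 * lb x)
  have h3 : exp (3/5 * lb x / 2) < exp (3/5 * la x) := by linarith
  rw [exp_lt_exp] at h3
  linarith

lemma lower (hr : r ≤ 3/5) (hx : x ∈ Ioo 0 (π/2)) : Hfun r (cos x) < sin x / x := by
  rcases lt_trichotomy r 0 with h | h | h
  · rw [H_lt_iff_neg h hx, phi_pos_iff]
    have h1 := la_gt hx
    have h2 := amgm (r * lb x)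
    have h3 : exp (r * la x) < exp (r * lb x / 2) := by
      rw [exp_lt_exp]; nlinarith
    linarith
  · subst h
    have hS := S_pos hx.1 hx.2
    have hC := C_pos hx.1 hx.2
    have hy := div_pos hS hx.1
    unfold Hfun
    rw [if_pos rfl, ← log_lt_log_iff (by positivity) hy, log_rpow hC, log_div hS.ne' hx.1.ne']
    have h1 := la_gt hx
    unfold la lb at h1
    linarith
  · rw [H_lt_iff h hx]
    exact phi_neg h hr hx

lemma lim_right (hr : 0 < r) :
    Tendsto (phi r) (𝓝[<] (π/2)) (𝓝 (2 * r * (log π - log 2) - log 2)) := by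
  have hs : Tendsto (fun x => log (sin x)) (𝓝[<] (π/2)) (𝓝 0) := by
    have h : Tendsto sin (𝓝[<] (π/2)) (𝓝 1) := by
      have := (continuous_sin.tendsto (π/2)).mono_left (nhdsWithin_le_nhds (s := Iio (π/2)))
      rwa [sin_pi_div_two] at this
    have := h.log (by norm_num)
    rwa [log_one] at this
  have hl : Tendsto (fun x => log x) (𝓝[<] (π/2)) (𝓝 (log π - log 2)) := by
    rw [← log_div pi_pos.ne' two_ne_zero]
    exact (continuousAt_log (by positivity)).tendsto.mono_left nhdsWithin_le_nhds
  have hc : Tendsto (fun x => log (cos x)) (𝓝[<] (π/2)) atBot :=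
    Real.tendsto_log_nhdsGT_zero.comp Real.tendsto_cos_pi_div_two
  have hlb : Tendsto lb (𝓝[<] (π/2)) atBot := by
    have := (hs.sub hl).add_atBot hc
    refine this.congr (fun x => ?_)
    unfold lb; ring
  have he : Tendsto (fun x => exp (r * lb x)) (𝓝[<] (π/2)) (𝓝 0) :=
    tendsto_exp_atBot.comp (hlb.const_mul_atBot hr)
  have h := (((he.const_add 1).log (by norm_num)).sub
    (((hs.sub hl).const_mul 2).const_mul r)).sub_const (log 2)
  have e : log (1 + 0) - r * (2 * (0 - (log π - log 2))) - log 2 =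
      2 * r * (log π - log 2) - log 2 := by
    rw [add_zero, log_one]; ring
  rw [e] at h
  exact h

end conv

lemma log_gap : 0 < 2 * (log π - log 2) := by
  have := log_lt_log two_pos (show (2:ℝ) < π by linarith [pi_gt_three])
  linarith

lemma upper {β x : ℝ} (hβ : log 2 / (2 * (log π - log 2)) ≤ β) (hx : x ∈ Ioo 0 (π/2)) :
    sin x / x < Hfun β (cos x) := by
  have hg := log_gap
  have h2 : 0 < log 2 := log_pos one_lt_two
  set r := log 2 / (2 * (log π - log 2)) with hr
  have hr0 : 0 < r := div_pos h2 hg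
  have hlim : Tendsto (phi r) (𝓝[<] (π/2)) (𝓝 0) := by
    have := lim_right hr0
    have e : 2 * r * (log π - log 2) - log 2 = 0 := by
      have : r * (2 * (log π - log 2)) = log 2 := div_mul_cancel₀ _ hg.ne'
      linarith
    rwa [e] at this
  have hb0 : 0 < β := hr0.trans_le hβ
  rw [lt_H_iff hb0 hx, phi_pos_iff]
  have h := (phi_pos_iff _ _).1 (phi_pos hr0 hlim hx)
  have hp : 1 ≤ β / r := (one_le_div hr0).2 hβ
  have ea : exp (β * la x) = exp (r * la x) ^ (β / r) := by
    rw [← exp_mul]; congr 1; field_simp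
  have eb : exp (β * lb x) = exp (r * lb x) ^ (β / r) := by
    rw [← exp_mul]; congr 1; field_simp
  rw [ea, eb]
  have h3 : exp (r * la x) ^ (β / r) < (1/2 * 1 + 1/2 * exp (r * lb x)) ^ (β / r) :=
    rpow_lt_rpow (exp_pos _).le (by linarith) (by linarith)
  have h4 := (convexOn_rpow hp).2 (show (1:ℝ) ∈ Ici 0 by simp)
    (show exp (r * lb x) ∈ Ici 0 from (exp_pos _).le)
    (show (0:ℝ) ≤ 1/2 by norm_num) (show (0:ℝ) ≤ 1/2 by norm_num) (by norm_num)
  simp only [smul_eq_mul, one_rpow] at h4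
  linarith

end HSB

open HSB

theorem Hfun_sin_bounds (α β : ℝ) :
    (∀ x ∈ Ioo (0 : ℝ) (π / 2),
        Hfun α (cos x) < sin x / x ∧ sin x / x < Hfun β (cos x)) ↔
      (α ≤ 3 / 5 ∧ β ≥ Real.log 2 / (2 * (Real.log π - Real.log 2))) := by
  constructor
  · intro h
    constructor
    · by_contra hα
      push Not at hα
      obtain ⟨x, hx, hp⟩ := phi_pos_exists hα
      have := (H_lt_iff (by linarith) hx).1 (h x hx).1
      linarith
    · have hb : 0 < β := by
        by_contra hb
        push Not at hb
        have hx : π/4 ∈ Ioo 0 (π/2) := ⟨by positivity, by linarith [pi_pos]⟩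
        have h1 := lower (r := β) (by linarith) hx
        have h2 := (h _ hx).2
        linarith
      have h0 : 0 ≤ 2 * β * (log π - log 2) - log 2 := by
        refine ge_of_tendsto (lim_right hb) ?_
        filter_upwards [Ioo_mem_nhdsLT (show (0:ℝ) < π/2 by positivity)] with x hx
        exact ((lt_H_iff hb hx).1 (h x hx).2).le
      rw [ge_iff_le, div_le_iff₀ log_gap]
      linarith
  · rintro ⟨h1, h2⟩ x hx
    exact ⟨lower h1 hx, upper h2 hx⟩
end

section
/- Let p be a nonzero real number. The inequality (sinh(x)/x)^(2p) + (tanh(x)/x)^p > 2 holds for every x ∈ (0, ∞) if and only if p > 0 or p ≤ −3/5. -/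
open Real Set

/-- Core polynomial inequality for the endpoint case. -/
lemma wz_poly (r m : ℝ) (hr : 0 < r) (hm : 1 < m) (h : r ^ 6 + r ^ 3 * m ^ 3 = 2) :
    0 < (1 - (r * m) ^ 5) * (m ^ 2 * (2 * r ^ 3 + m ^ 3)) + (m ^ 10 - 1) * r ^ 5 := by
  have hm3 : 1 < m ^ 3 := one_lt_pow₀ hm (by norm_num)
  have hr1 : r < 1 := by
    by_contra hc
    push Not at hc
    have h6 : 1 ≤ r ^ 6 := one_le_pow₀ hc
    have h3 : 1 ≤ r ^ 3 := one_le_pow₀ hc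
    nlinarith
  obtain ⟨v, hv⟩ : ∃ v, v = r * m := ⟨_, rfl⟩
  have hv0 : 0 < v := by rw [hv]; positivity
  have h' : r ^ 6 = 2 - v ^ 3 := by rw [hv]; linarith [mul_pow r m 3]
  have hr6 : r ^ 6 < 1 := pow_lt_one₀ hr.le hr1 (by norm_num)
  have hv1 : 1 < v := by
    by_contra hc
    push Not at hc
    have : v ^ 3 ≤ 1 := pow_le_one₀ hv0.le hc
    linarith
  obtain ⟨q, hq⟩ : ∃ q, q = r ^ 2 := ⟨_, rfl⟩
  have hq0 : 0 < q := by rw [hq]; positivity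
  have hq1 : q < 1 := by rw [hq]; exact pow_lt_one₀ hr.le hr1 (by norm_num)
  have hq3 : q ^ 3 = 2 - v ^ 3 := by rw [← h', hq]; ring
  have hqb : 9 * q ^ 2 ≤ 2 + 8 * q ^ 3 - q ^ 6 := by
    have : 0 ≤ (1 - q) ^ 3 * (2 + 6 * q + 3 * q ^ 2 + q ^ 3) := by
      have : 0 < 1 - q := by linarith
      positivity
    nlinarith
  have hq5 : 9 * q ^ 5 ≤ q ^ 3 * (2 + 8 * q ^ 3 - q ^ 6) := by
    have := mul_le_mul_of_nonneg_left hqb (pow_pos hq0 3).le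
    nlinarith
  have hQ : 0 < 9 * (4 * v ^ 2 - v ^ 5 - 4 * v ^ 7 + 2 * v ^ 10) - 28 + 22 * v ^ 3 - 2 * v ^ 6
      - v ^ 9 := by
    obtain ⟨u, hu⟩ : ∃ u, u = v - 1 := ⟨_, rfl⟩
    have hu0 : 0 < u := by linarith
    have hvu : v = 1 + u := by linarith
    have : 0 < 708 * u ^ 3 + 2319 * u ^ 4 + 3633 * u ^ 5 + 3442 * u ^ 6 + 2088 * u ^ 7
      + 801 * u ^ 8 + 179 * u ^ 9 + 18 * u ^ 10 := by positivity
    rw [hvu]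
    refine lt_of_lt_of_eq this ?_
    ring
  have hq6 : q ^ 6 = (2 - v ^ 3) ^ 2 := by rw [← hq3]; ring
  rw [hq3, hq6] at hq5
  have hfin : 0 < v ^ 2 * (1 - v ^ 5) * (4 - v ^ 3) + v ^ 10 - q ^ 5 := by
    nlinarith
  have e : ((1 - (r * m) ^ 5) * (m ^ 2 * (2 * r ^ 3 + m ^ 3)) + (m ^ 10 - 1) * r ^ 5) * r ^ 5
      = v ^ 2 * (1 - v ^ 5) * (4 - v ^ 3) + v ^ 10 - q ^ 5 := by
    have : 4 - v ^ 3 = 2 * r ^ 6 + v ^ 3 := by rw [h']; ring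
    rw [this, hv, hq]; ring
  rw [← e] at hfin
  exact pos_of_mul_pos_left hfin (by positivity)

/-- Positive root `W` of `W ^ 2 + W * k = 2`. -/
noncomputable def wzW (k : ℝ) : ℝ := (√(k ^ 2 + 8) - k) / 2

lemma wzW_pos {k : ℝ} (hk : 0 < k) : 0 < wzW k := by
  have : k < √(k ^ 2 + 8) := by
    apply Real.lt_sqrt_of_sq_lt; linarith
  unfold wzW; linarith

lemma wzW_eq (k : ℝ) : wzW k ^ 2 + wzW k * k = 2 := by
  have := Real.sq_sqrt (show 0 ≤ k ^ 2 + 8 by positivity)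
  unfold wzW; nlinarith

lemma wzW_deriv (k : ℝ) : HasDerivAt wzW (-wzW k / (2 * wzW k + k)) k := by
  have h1 : HasDerivAt (fun k : ℝ => k ^ 2 + 8) (2 * k) k := by
    simpa using (hasDerivAt_pow 2 k).add_const 8
  have h2 := ((h1.sqrt (by positivity)).sub (hasDerivAt_id k)).div_const 2
  refine h2.congr_deriv ?_
  have hs : 0 < √(k ^ 2 + 8) := by positivity
  unfold wzW
  have hd : 2 * ((√(k ^ 2 + 8) - k) / 2) + k = √(k ^ 2 + 8) := by ring
  rw [hd]
  generalize √(k ^ 2 + 8) = z at hs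
  field_simp
  ring

/-- endpoint comparison -/
noncomputable def wzh (x : ℝ) : ℝ := x - sinh x * wzW (cosh x ^ (3 / 5 : ℝ)) ^ (5 / 3 : ℝ)

lemma wzh_deriv (x : ℝ) : ∃ d, HasDerivAt wzh d x ∧ (0 < x → 0 < d) := by
  have hc : 0 < cosh x := cosh_pos x
  have hk : 0 < cosh x ^ (3 / 5 : ℝ) := rpow_pos_of_pos hc _
  have h1 := (hasDerivAt_cosh x).rpow_const (p := (3 / 5 : ℝ)) (Or.inl hc.ne')
  have hW := wzW_pos hk
  have h2 := (wzW_deriv _).comp x h1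
  have h3 := h2.rpow_const (p := (5 / 3 : ℝ)) (Or.inl hW.ne')
  have h4 := (hasDerivAt_id x).sub ((hasDerivAt_sinh x).mul h3)
  refine ⟨_, h4, fun hx => ?_⟩
  simp only [Function.comp_apply]
  obtain ⟨m, hm⟩ : ∃ m, m = cosh x ^ (1 / 5 : ℝ) := ⟨_, rfl⟩
  have hm1 : 1 < m := by
    rw [hm]; exact Real.one_lt_rpow (one_lt_cosh.2 hx.ne') (by norm_num)
  have hm0 : 0 < m := by linarith
  have ek : cosh x ^ (3 / 5 : ℝ) = m ^ 3 := by
    rw [hm, ← rpow_natCast, ← rpow_mul hc.le]; norm_num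
  have ec : cosh x = m ^ 5 := by
    rw [hm, ← rpow_natCast, ← rpow_mul hc.le]; norm_num
  have ec2 : cosh x ^ (3 / 5 - 1 : ℝ) = (m ^ 2)⁻¹ := by
    rw [hm, ← rpow_natCast, ← rpow_mul hc.le, ← rpow_neg hc.le]; norm_num
  rw [ek, ec2]
  rw [ek] at hW
  have hWe := wzW_eq (m ^ 3)
  generalize wzW (m ^ 3) = W at hW hWe ⊢
  obtain ⟨r, hr⟩ : ∃ r, r = W ^ (1 / 3 : ℝ) := ⟨_, rfl⟩
  have hr0 : 0 < r := by rw [hr]; exact rpow_pos_of_pos hW _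
  have e1 : W = r ^ 3 := by
    rw [hr, ← rpow_natCast, ← rpow_mul hW.le]; norm_num
  have e2 : W ^ (5 / 3 : ℝ) = r ^ 5 := by
    rw [hr, ← rpow_natCast, ← rpow_mul hW.le]; norm_num
  have e3 : W ^ (5 / 3 - 1 : ℝ) = r ^ 2 := by
    rw [hr, ← rpow_natCast, ← rpow_mul hW.le]; norm_num
  rw [e2, e3, e1]
  rw [e1] at hWe
  have hs : sinh x ^ 2 = m ^ 10 - 1 := by
    have := cosh_sq x
    rw [ec] at this
    linarith [show (m ^ 5) ^ 2 = m ^ 10 by ring]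
  rw [ec]
  have key := wz_poly r m hr0 hm1 (by linarith [show (r ^ 3) ^ 2 = r ^ 6 by ring])
  have hD : 0 < m ^ 2 * (2 * r ^ 3 + m ^ 3) := by positivity
  rw [← hs] at key
  have := div_pos key hD
  refine lt_of_lt_of_eq this ?_
  field_simp
  ring

lemma wz_mono {f : ℝ → ℝ} (hf : ∀ x, ∃ d, HasDerivAt f d x ∧ (0 < x → 0 < d)) (h0 : f 0 = 0)
    {x : ℝ} (hx : 0 < x) : 0 < f x := by
  have : StrictMonoOn f (Ici 0) := by
    apply strictMonoOn_of_deriv_pos (convex_Ici 0)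
    · intro y _
      obtain ⟨d, hd, _⟩ := hf y
      exact hd.continuousAt.continuousWithinAt
    · intro y hy
      rw [interior_Ici] at hy
      obtain ⟨d, hd, h⟩ := hf y
      rw [hd.deriv]; exact h hy
  have := this (show (0:ℝ) ∈ Ici 0 by simp) (show x ∈ Ici 0 from hx.le) hx
  rwa [h0] at this

lemma wz_end {x : ℝ} (hx : 0 < x) :
    2 < (x / sinh x) ^ (6 / 5 : ℝ) + (x / tanh x) ^ (3 / 5 : ℝ) := by
  have h := wz_mono wzh_deriv (by simp [wzh]) hx
  have hs : 0 < sinh x := sinh_pos_iff.2 hx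
  have hc : 0 < cosh x := cosh_pos x
  have hk : 0 < cosh x ^ (3 / 5 : ℝ) := rpow_pos_of_pos hc _
  have hW := wzW_pos hk
  have hWe := wzW_eq (cosh x ^ (3 / 5 : ℝ))
  unfold wzh at h
  have h1 : wzW (cosh x ^ (3 / 5 : ℝ)) ^ (5 / 3 : ℝ) < x / sinh x := by
    rw [lt_div_iff₀ hs]; linarith
  have h2 := rpow_lt_rpow (rpow_pos_of_pos hW _).le h1 (show (0:ℝ) < 3 / 5 by norm_num)
  rw [← rpow_mul hW.le] at h2
  norm_num at h2
  have hxs : 0 < x / sinh x := by positivity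
  have e1 : (x / sinh x) ^ (6 / 5 : ℝ) = ((x / sinh x) ^ (3 / 5 : ℝ)) ^ 2 := by
    rw [← rpow_natCast, ← rpow_mul hxs.le]; norm_num
  have e2 : x / tanh x = x / sinh x * cosh x := by
    rw [tanh_eq_sinh_div_cosh]; field_simp
  rw [e1, e2, mul_rpow hxs.le hc.le]
  nlinarith

/-- Lazarevic inequality -/
lemma wz_laz {x : ℝ} (hx : 0 < x) : x ^ 3 * cosh x < sinh x ^ 3 := by
  have hc : 0 < cosh x := cosh_pos x
  have h : 0 < sinh x * cosh x ^ (-(1 / 3) : ℝ) - x := by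
    refine wz_mono (f := fun x => sinh x * cosh x ^ (-(1 / 3) : ℝ) - x) ?_ (by simp) hx
    intro x
    have hc : 0 < cosh x := cosh_pos x
    have h1 := (hasDerivAt_cosh x).rpow_const (p := (-(1 / 3) : ℝ)) (Or.inl hc.ne')
    refine ⟨_, ((hasDerivAt_sinh x).mul h1).sub (hasDerivAt_id x), fun hx => ?_⟩
    obtain ⟨m, hm⟩ : ∃ m, m = cosh x ^ (1 / 3 : ℝ) := ⟨_, rfl⟩
    have hm1 : 1 < m := by
      rw [hm]; exact Real.one_lt_rpow (one_lt_cosh.2 hx.ne') (by norm_num)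
    have hm0 : 0 < m := by linarith
    have ec : cosh x = m ^ 3 := by
      rw [hm, ← rpow_natCast, ← rpow_mul hc.le]; norm_num
    have ec1 : cosh x ^ (-(1 / 3) : ℝ) = m⁻¹ := by
      rw [hm, ← rpow_neg hc.le]
    have ec2 : cosh x ^ (-(1 / 3) - 1 : ℝ) = (m ^ 4)⁻¹ := by
      rw [hm, ← rpow_natCast, ← rpow_mul hc.le, ← rpow_neg hc.le]; norm_num
    have hs : sinh x ^ 2 = m ^ 6 - 1 := by
      have := cosh_sq x
      rw [ec] at this
      linarith [show (m ^ 3) ^ 2 = m ^ 6 by ring]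
    rw [ec1, ec2, ec]
    have : 0 < (m ^ 2 - 1) ^ 2 * (2 * m ^ 2 + 1) / (3 * m ^ 4) := by
      have : 0 < m ^ 2 - 1 := by nlinarith
      positivity
    refine lt_of_lt_of_eq this ?_
    have e : m ^ 3 * m⁻¹ + sinh x * (sinh x * -(1 / 3) * (m ^ 4)⁻¹) - 1
      = m ^ 3 * m⁻¹ - sinh x ^ 2 / 3 * (m ^ 4)⁻¹ - 1 := by ring
    rw [e, hs]
    field_simp
    ring
  obtain ⟨m, hm⟩ : ∃ m, m = cosh x ^ (1 / 3 : ℝ) := ⟨_, rfl⟩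
  have hm0 : 0 < m := by rw [hm]; positivity
  have ec : cosh x = m ^ 3 := by
    rw [hm, ← rpow_natCast, ← rpow_mul hc.le]; norm_num
  have ec1 : cosh x ^ (-(1 / 3) : ℝ) = m⁻¹ := by
    rw [hm, ← rpow_neg hc.le]
  rw [ec1] at h
  have h2 : x * m < sinh x := by
    have : x < sinh x / m := by rw [div_eq_mul_inv]; linarith
    rwa [lt_div_iff₀ hm0] at this
  rw [ec, ← mul_pow]
  exact pow_lt_pow_left₀ h2 (by positivity) (by norm_num)

lemma wz_pos {p x : ℝ} (hp : 0 < p) (hx : 0 < x) :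
    2 < (sinh x / x) ^ (2 * p) + (tanh x / x) ^ p := by
  have hs : 0 < sinh x := sinh_pos_iff.2 hx
  have hc : 0 < cosh x := cosh_pos x
  have ht : 0 < tanh x := by rw [tanh_eq_sinh_div_cosh]; positivity
  have h := wz_laz hx
  have h1 : 1 < (sinh x / x) ^ 2 * (tanh x / x) := by
    have : (sinh x / x) ^ 2 * (tanh x / x) = sinh x ^ 3 / (x ^ 3 * cosh x) := by
      rw [tanh_eq_sinh_div_cosh]; field_simp
    rw [this, one_lt_div (by positivity)]; exact h
  have h2 := Real.one_lt_rpow h1 hp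
  rw [mul_rpow (by positivity) (by positivity), ← rpow_natCast, ← rpow_mul (by positivity)] at h2
  norm_num at h2
  have hA : 0 < (sinh x / x) ^ (2 * p) := by positivity
  have hB : 0 < (tanh x / x) ^ p := by positivity
  nlinarith [sq_nonneg ((sinh x / x) ^ (2 * p) - (tanh x / x) ^ p)]

lemma wz_neg {p x : ℝ} (hp : p ≤ -(3 / 5)) (hx : 0 < x) :
    2 < (sinh x / x) ^ (2 * p) + (tanh x / x) ^ p := by
  have hs : 0 < sinh x := sinh_pos_iff.2 hx
  have hc : 0 < cosh x := cosh_pos x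
  have ht : 0 < tanh x := by rw [tanh_eq_sinh_div_cosh]; positivity
  have h := wz_end hx
  have e1 : (sinh x / x) ^ (2 * p) = ((x / sinh x) ^ (6 / 5 : ℝ)) ^ (-p * (5 / 3)) := by
    rw [← inv_div, inv_rpow (by positivity), ← rpow_neg (by positivity), ← rpow_mul (by positivity)]
    congr 1; ring
  have e2 : (tanh x / x) ^ p = ((x / tanh x) ^ (3 / 5 : ℝ)) ^ (-p * (5 / 3)) := by
    rw [← inv_div, inv_rpow (by positivity), ← rpow_neg (by positivity), ← rpow_mul (by positivity)]
    congr 1; ring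
  rw [e1, e2]
  have hA : 0 < (x / sinh x) ^ (6 / 5 : ℝ) := by positivity
  have hB : 0 < (x / tanh x) ^ (3 / 5 : ℝ) := by positivity
  have hq : 1 ≤ -p * (5 / 3) := by linarith
  have b1 := one_add_mul_self_le_rpow_one_add
    (s := (x / sinh x) ^ (6 / 5 : ℝ) - 1) (by linarith) hq
  have b2 := one_add_mul_self_le_rpow_one_add
    (s := (x / tanh x) ^ (3 / 5 : ℝ) - 1) (by linarith) hq
  rw [add_sub_cancel] at b1 b2
  nlinarith

lemma wz_bounds {x : ℝ} (hx : 0 < x) (hx1 : x ≤ 1) :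
    cosh x ≤ 1 + x ^ 2 / 2 + x ^ 4 / 24 + x ^ 6 / 360 ∧
    1 + x ^ 2 / 2 + x ^ 4 / 24 - x ^ 6 / 360 ≤ cosh x ∧
    x + x ^ 3 / 6 + x ^ 5 / 120 - x ^ 7 / 4000 ≤ sinh x ∧
    sinh x ≤ x + x ^ 3 / 6 + x ^ 5 / 120 + x ^ 7 / 4000 := by
  have hab : |x| ≤ 1 := by rw [abs_of_pos hx]; exact hx1
  have hab' : |-x| ≤ 1 := by rwa [abs_neg]
  have a1 := abs_le.1 (Real.exp_bound hab (n := 6) (by norm_num))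
  have a2 := abs_le.1 (Real.exp_bound hab' (n := 6) (by norm_num))
  have a3 := abs_le.1 (Real.exp_bound hab (n := 7) (by norm_num))
  have a4 := abs_le.1 (Real.exp_bound hab' (n := 7) (by norm_num))
  rw [abs_neg, abs_of_pos hx] at a2 a4
  rw [abs_of_pos hx] at a1 a3
  simp only [Finset.sum_range_succ, Finset.sum_range_zero, Nat.factorial] at a1 a2 a3 a4
  norm_num at a1 a2 a3 a4
  have p6 : 0 < x ^ 6 := by positivity
  have p7 : 0 < x ^ 7 := by positivity
  rw [cosh_eq, sinh_eq]
  ring_nf at a1 a2 a3 a4 ⊢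
  refine ⟨?_, ?_, ?_, ?_⟩
  · linarith [a1.1, a1.2, a2.1, a2.2]
  · linarith [a1.1, a1.2, a2.1, a2.2]
  · linarith [a3.1, a3.2, a4.1, a4.2]
  · linarith [a3.1, a3.2, a4.1, a4.2]

lemma wz_exp_up {v : ℝ} (h0 : 0 ≤ v) (h1 : v ≤ 1) : exp v ≤ 1 + v + v ^ 2 / 2 + v ^ 3 := by
  have := Real.exp_bound' h0 h1 (n := 3) (by norm_num)
  simp only [Finset.sum_range_succ, Finset.sum_range_zero, Nat.factorial] at this
  norm_num at this
  have : 0 ≤ v ^ 3 := by positivity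
  linarith

lemma wz_exp_neg {u : ℝ} (h0 : 0 ≤ u) : exp (-u) ≤ 1 - u + u ^ 2 / 2 := by
  have h := Real.quadratic_le_exp_of_nonneg h0
  rw [exp_neg]
  have hp : 0 < 1 - u + u ^ 2 / 2 := by nlinarith [sq_nonneg (u - 1)]
  rw [inv_le_iff_one_le_mul₀ (exp_pos u)]
  have := mul_le_mul_of_nonneg_left h hp.le
  nlinarith [sq_nonneg (u ^ 2)]

lemma wz_cpoly {t q : ℝ} (ht0 : 0 < t) (ht1 : t < 3 / 10) (hq : q = 3 / 5 - 2 * t) :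
    q * (t / 3 + t ^ 2 / 15) ^ 2 + (t / 3 + t ^ 2 / 15) ^ 3
        ≤ (t ^ 2 / 15 - t ^ 3 / 100) * (1 - t) := by
  have p2 : 0 < t ^ 2 := by positivity
  have p3 : 0 < t ^ 3 := by positivity
  have t2 : t ^ 2 ≤ t * (3 / 10) := by nlinarith
  have t4 : t ^ 4 ≤ t * (3 / 10) ^ 3 := by
    have : t ^ 3 ≤ (3 / 10) ^ 3 := pow_le_pow_left₀ ht0.le ht1.le 3
    have := mul_le_mul_of_nonneg_left this ht0.le
    linarith [show t * t ^ 3 = t ^ 4 by ring]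
  have t3 : t ^ 3 ≤ t * (3 / 10) ^ 2 := by
    have : t ^ 2 ≤ (3 / 10) ^ 2 := pow_le_pow_left₀ ht0.le ht1.le 2
    have := mul_le_mul_of_nonneg_left this ht0.le
    linarith [show t * t ^ 2 = t ^ 3 by ring]
  have h : 0 ≤ (1 / 15 - t / 100) * (1 - t) - (3 / 5 - 2 * t) * (1 / 3 + t / 15) ^ 2
        - t * (1 / 3 + t / 15) ^ 3 := by
    ring_nf
    linarith
  have := mul_nonneg p2.le h
  rw [hq]
  ring_nf at this ⊢
  linarith

set_option maxHeartbeats 1000000 in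
lemma wz_counter {q : ℝ} (hq : 0 < q) (hq1 : q < 3 / 5) : ∃ x : ℝ, 0 < x ∧
    (sinh x / x) ^ (2 * -q) + (tanh x / x) ^ (-q) ≤ 2 := by
  obtain ⟨t, ht⟩ : ∃ t, t = (3 / 5 - q) / 2 := ⟨_, rfl⟩
  have ht0 : 0 < t := by linarith
  have ht1 : t < 3 / 10 := by linarith
  obtain ⟨x, hxd⟩ : ∃ x, x = √t := ⟨_, rfl⟩
  have hx : 0 < x := by rw [hxd]; positivity
  have hx2 : x ^ 2 = t := by rw [hxd]; exact sq_sqrt ht0.le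
  have hx1 : x ≤ 1 := by nlinarith
  refine ⟨x, hx, ?_⟩
  have hs : 0 < sinh x := sinh_pos_iff.2 hx
  have hc : 0 < cosh x := cosh_pos x
  have htn : 0 < tanh x := by rw [tanh_eq_sinh_div_cosh]; positivity
  obtain ⟨b1, b0, b2, b3⟩ := wz_bounds hx hx1
  obtain ⟨S, hS⟩ : ∃ S, S = sinh x / x := ⟨_, rfl⟩
  obtain ⟨c, hcc⟩ : ∃ c, c = cosh x := ⟨_, rfl⟩
  have c1 : c ≤ 1 + t / 2 + t ^ 2 / 24 + t ^ 3 / 360 := by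
    rw [hcc, ← hx2]; linarith [show (x ^ 2) ^ 2 = x ^ 4 by ring, show (x ^ 2) ^ 3 = x ^ 6 by ring]
  have c0 : 1 + t / 2 + t ^ 2 / 24 - t ^ 3 / 360 ≤ c := by
    rw [hcc, ← hx2]; linarith [show (x ^ 2) ^ 2 = x ^ 4 by ring, show (x ^ 2) ^ 3 = x ^ 6 by ring]
  have c2 : 1 + t / 6 + t ^ 2 / 120 - t ^ 3 / 4000 ≤ S := by
    rw [hS, ← hx2, le_div_iff₀ hx]; refine le_trans (le_of_eq ?_) b2; ring
  have c3 : S ≤ 1 + t / 6 + t ^ 2 / 120 + t ^ 3 / 4000 := by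
    rw [hS, ← hx2, div_le_iff₀ hx]; refine le_trans b3 (le_of_eq ?_); ring
  have hT : tanh x / x = S / c := by
    rw [hS, hcc, tanh_eq_sinh_div_cosh]; field_simp
  have hc0 : 0 < c := hcc ▸ hc
  have hc1 : 1 < c := hcc ▸ one_lt_cosh.2 hx.ne'
  rw [hT, ← hS]
  have t3 : t ^ 3 ≤ t ^ 2 * (3 / 10) := by nlinarith [pow_pos ht0 2]
  have t2 : t ^ 2 ≤ t * (3 / 10) := by nlinarith
  have p3 : 0 < t ^ 3 := by positivity
  have p2 : 0 < t ^ 2 := by positivity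
  have hS1 : 1 < S := by linarith
  have hS0 : 0 < S := by linarith
  -- the logarithms
  obtain ⟨a, ha⟩ : ∃ a, a = log S := ⟨_, rfl⟩
  obtain ⟨b, hb⟩ : ∃ b, b = log (c / S) := ⟨_, rfl⟩
  have hScle : S ≤ c := by linarith
  have ha0 : 0 ≤ a := by rw [ha]; exact log_nonneg hS1.le
  have hb0 : 0 ≤ b := by rw [hb]; exact log_nonneg (by rw [one_le_div hS0]; exact hScle)
  have ha1 : a ≤ t / 6 + t ^ 2 / 60 := by
    have := log_le_sub_one_of_pos hS0
    rw [← ha] at this; linarith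
  have hb1 : b ≤ t / 3 + t ^ 2 / 15 := by
    have := log_le_sub_one_of_pos (show 0 < c / S by positivity)
    rw [← hb] at this
    have h2 : c / S - 1 ≤ c - S := by
      rw [div_sub_one hS0.ne', div_le_iff₀ hS0]
      exact le_mul_of_one_le_right (by linarith) hS1.le
    linarith
  have hab : (t ^ 2 / 15 - t ^ 3 / 100) * (1 - t) ≤ 2 * a - b := by
    have h1 := log_le_sub_one_of_pos (show 0 < c / S ^ 3 by positivity)
    have h2 : log (c / S ^ 3) = b - 2 * a := by
      rw [hb, ha, log_div hc0.ne' (by positivity), log_div hc0.ne' hS0.ne', log_pow]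
      push_cast; ring
    rw [h2] at h1
    have h3 : t ^ 2 / 15 - t ^ 3 / 100 ≤ S ^ 3 - c := by
      have e1 : t / 6 ≤ S - 1 := by linarith
      have e2 : (t / 6) ^ 2 ≤ (S - 1) ^ 2 := pow_le_pow_left₀ (by positivity) e1 2
      have e3 : 0 ≤ (S - 1) ^ 3 := pow_nonneg (by linarith) 3
      have e4 : S ^ 3 = 1 + 3 * (S - 1) + 3 * (S - 1) ^ 2 + (S - 1) ^ 3 := by ring
      have e5 : (t / 6) ^ 2 = t ^ 2 / 36 := by ring
      linarith
    have h4 : 1 - t ≤ 1 / S ^ 3 := by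
      have e1 : S ^ 3 ≤ (1 + t / 5) ^ 3 := pow_le_pow_left₀ hS0.le (by linarith) 3
      have e2 : (1 + t / 5) ^ 3 = 1 + 3 / 5 * t + 3 / 25 * t ^ 2 + t ^ 3 / 125 := by ring
      have e3 : S ^ 3 ≤ 1 + t := by linarith
      rw [le_div_iff₀ (by positivity)]
      have := mul_le_mul_of_nonneg_left e3 (show 0 ≤ 1 - t by linarith)
      linarith [show (1 - t) * (1 + t) = 1 - t ^ 2 by ring]
    have h5 : (t ^ 2 / 15 - t ^ 3 / 100) * (1 - t) ≤ (S ^ 3 - c) * (1 / S ^ 3) :=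
      mul_le_mul h3 h4 (by linarith) (by linarith)
    have h6 : (S ^ 3 - c) * (1 / S ^ 3) = 1 - c / S ^ 3 := by field_simp
    linarith
  have r1 : S ^ (2 * -q) = exp (-(2 * q * a)) := by
    rw [rpow_def_of_pos hS0, ha]; congr 1; ring
  have r2 : (S / c) ^ (-q) = exp (q * b) := by
    rw [← inv_div, inv_rpow (by positivity), ← rpow_neg (by positivity), neg_neg,
      rpow_def_of_pos (by positivity), hb]; congr 1; ring
  rw [r1, r2]
  have f1 := wz_exp_neg (u := 2 * q * a) (by positivity)
  have hqb : q * b ≤ 1 := mul_le_one₀ (by linarith) hb0 (by linarith)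
  have f2 := wz_exp_up (v := q * b) (by positivity) hqb
  have g1 : (2 * a) ^ 2 ≤ (t / 3 + t ^ 2 / 15) ^ 2 :=
    pow_le_pow_left₀ (by positivity) (by linarith) 2
  have g2 : b ^ 2 ≤ (t / 3 + t ^ 2 / 15) ^ 2 := pow_le_pow_left₀ hb0 hb1 2
  have g3 : b ^ 3 ≤ (t / 3 + t ^ 2 / 15) ^ 3 := pow_le_pow_left₀ hb0 hb1 3
  have main : q * ((2 * a) ^ 2 + b ^ 2) / 2 + q ^ 2 * b ^ 3 ≤ 2 * a - b := by
    have k1 := mul_le_mul_of_nonneg_left (add_le_add g1 g2) hq.le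
    have k2 : q ^ 2 * b ^ 3 ≤ 1 * (t / 3 + t ^ 2 / 15) ^ 3 :=
      mul_le_mul (pow_le_one₀ hq.le (by linarith)) g3 (by positivity) (by norm_num)
    have k3 := wz_cpoly ht0 ht1 (show q = 3 / 5 - 2 * t by linarith)
    linarith
  have := mul_le_mul_of_nonneg_left main hq.le
  have e1 : (2 * q * a) ^ 2 = q * (q * (2 * a) ^ 2) := by ring
  have e2 : (q * b) ^ 2 = q * (q * b ^ 2) := by ring
  have e3 : (q * b) ^ 3 = q * (q ^ 2 * b ^ 3) := by ring
  rw [e1] at f1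
  rw [e2, e3] at f2
  linarith

theorem wilker_zhu_hyp (p : ℝ) (hp : p ≠ 0) :
    (∀ x ∈ Ioi (0 : ℝ),
        (sinh x / x) ^ (2 * p) + (tanh x / x) ^ p > 2) ↔
      (0 < p ∨ p ≤ -(3 / 5)) := by
  constructor
  · intro h
    by_contra hc
    push Not at hc
    obtain ⟨h1, h2⟩ := hc
    have h3 : p < 0 := lt_of_le_of_ne h1 hp
    obtain ⟨x, hx, hle⟩ := wz_counter (q := -p) (by linarith) (by linarith)
    have := h x hx
    rw [neg_neg] at hle
    linarith
  · rintro (h | h) x hx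
    · exact wz_pos h hx
    · exact wz_neg h hx
end

section
/- For a nonzero real number r and a positive real t, define H_r(t) = ((√(8 + t^(2r)) + t^r)/4)^(1/r), and define H_0(t) = t^(1/3). Then for real numbers α, β, the double inequality H_α(cosh x) < sinh(x)/x < H_β(cosh x) holds for every x ∈ (0, ∞) if and only if α ≤ 0 and β ≥ 3/5. -/
open Real Set

open Filter Topology

lemma aux_pos (f f' : ℝ → ℝ) (hd : ∀ x, 0 < x → HasDerivAt f (f' x) x)
    (hp : ∀ x, 0 < x → 0 < f' x) (hl : Tendsto f (𝓝[>] 0) (𝓝 0)) :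
    ∀ x, 0 < x → 0 < f x := by
  have hm : StrictMonoOn f (Ioi 0) := by
    apply strictMonoOn_of_deriv_pos (convex_Ioi 0)
    · intro x hx
      exact (hd x hx).continuousAt.continuousWithinAt
    · intro x hx
      rw [interior_Ioi] at hx
      rw [(hd x hx).deriv]
      exact hp x hx
  intro x hx
  have h1 : f (x/2) < f x := hm (by simp; linarith) (by simpa using hx) (by linarith)
  have h2 : 0 ≤ f (x/2) := by
    apply le_of_tendsto hl
    filter_upwards [Ioo_mem_nhdsGT (show (0:ℝ) < x/2 by linarith)] with y hy
    exact (hm hy.1 (by simp; linarith) hy.2).le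
  linarith

lemma aux_pos0 (f f' : ℝ → ℝ) (hd : ∀ x, HasDerivAt f (f' x) x)
    (hp : ∀ x, 0 < x → 0 < f' x) (hl : f 0 = 0) :
    ∀ x, 0 < x → 0 < f x := by
  apply aux_pos f f' (fun x _ => hd x) hp
  have := (hd 0).continuousAt.tendsto
  rw [hl] at this
  exact this.mono_left nhdsWithin_le_nhds

lemma sinh_lt_mul_cosh : ∀ x : ℝ, 0 < x → 0 < x * cosh x - sinh x := by
  apply aux_pos0 _ (fun x => x * sinh x)
  · intro x
    refine HasDerivAt.congr_deriv
      (((hasDerivAt_id' x).mul (Real.hasDerivAt_cosh x)).sub (Real.hasDerivAt_sinh x)) ?_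
    ring
  · intro x hx
    exact mul_pos hx (Real.sinh_pos_iff.2 hx)
  · simp

lemma laz_aux2 : ∀ x : ℝ, 0 < x → 0 < x * sinh x - 2 * cosh x + 2 := by
  apply aux_pos0 _ (fun x => x * cosh x - sinh x)
  · intro x
    refine HasDerivAt.congr_deriv ((((hasDerivAt_id' x).mul (Real.hasDerivAt_sinh x)).sub
      ((Real.hasDerivAt_cosh x).const_mul 2)).add_const 2) ?_
    ring
  · exact sinh_lt_mul_cosh
  · simp

lemma laz_aux : ∀ x : ℝ, 0 < x → 0 < x * (cosh x + 2) - 3 * sinh x := by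
  apply aux_pos0 _ (fun x => x * sinh x - 2 * cosh x + 2)
  · intro x
    refine HasDerivAt.congr_deriv (((hasDerivAt_id' x).mul
      ((Real.hasDerivAt_cosh x).add_const 2)).sub
      ((Real.hasDerivAt_sinh x).const_mul 3)) ?_
    ring
  · exact laz_aux2
  · simp

lemma tendsto_sinh_div : Tendsto (fun x : ℝ => sinh x / x) (𝓝[>] 0) (𝓝 1) := by
  have h := (Real.hasDerivAt_sinh 0).tendsto_slope
  have h2 := h.mono_left (nhdsWithin_mono 0 (show Ioi (0:ℝ) ⊆ {0}ᶜ by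
    intro x hx; simp; exact (ne_of_gt hx)))
  rw [cosh_zero] at h2
  refine h2.congr' (Eventually.of_forall fun x => ?_)
  simp [slope_def_field]

lemma tendsto_logS : Tendsto (fun x : ℝ => log (sinh x / x)) (𝓝[>] 0) (𝓝 0) := by
  have := tendsto_sinh_div.log (by norm_num)
  simpa using this

lemma tendsto_logC : Tendsto (fun x : ℝ => log (cosh x)) (𝓝[>] 0) (𝓝 0) := by
  have : ContinuousAt (fun x : ℝ => log (cosh x)) 0 :=
    (Real.continuous_cosh.continuousAt).log (by simp)
  have h := this.tendsto
  simp at h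
  exact h.mono_left nhdsWithin_le_nhds

lemma hasDeriv_logS (x : ℝ) (hx : 0 < x) :
    HasDerivAt (fun x : ℝ => log (sinh x / x)) (cosh x / sinh x - 1 / x) x := by
  have hs := Real.sinh_pos_iff.2 hx
  refine HasDerivAt.congr_deriv (((Real.hasDerivAt_sinh x).div (hasDerivAt_id' x) hx.ne').log
    (by simp [hx.ne', hs.ne'])) ?_
  simp only [Pi.div_apply]
  field_simp

lemma hasDeriv_logC (x : ℝ) :
    HasDerivAt (fun x : ℝ => log (cosh x)) (sinh x / cosh x) x :=
  (Real.hasDerivAt_cosh x).log (Real.cosh_pos x).ne'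

lemma lazarevic : ∀ x : ℝ, 0 < x → 0 < 3 * log (sinh x / x) - log (cosh x) := by
  apply aux_pos _ (fun x => 3 * (cosh x / sinh x - 1 / x) - sinh x / cosh x)
  · intro x hx
    exact ((hasDeriv_logS x hx).const_mul 3).sub (hasDeriv_logC x)
  · intro x hx
    have hs := Real.sinh_pos_iff.2 hx
    have hc := Real.cosh_pos x
    have h := laz_aux (2*x) (by linarith)
    rw [Real.cosh_two_mul, Real.sinh_two_mul] at h
    have h3 := Real.cosh_sq x
    have : 3 * (cosh x / sinh x - 1 / x) - sinh x / cosh x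
      = (x * (2 * cosh x ^ 2 + 1) - 3 * sinh x * cosh x) / (x * sinh x * cosh x) := by
      field_simp
      linear_combination x * h3
    rw [this]
    apply div_pos _ (by positivity)
    nlinarith
  · have := (tendsto_logS.const_mul 3).sub tendsto_logC
    simpa using this

lemma hasSum_congr_aux {f g : ℕ → ℝ} {a : ℝ} (h : ∀ n, f n = g n) : HasSum f a ↔ HasSum g a := by
  rw [funext h]

lemma ser0 (k x : ℝ) : HasSum (fun n : ℕ => k^(2*n+1) / (2*n+1).factorial * x^(2*n+1)) (sinh (k*x)) := by
  refine (hasSum_congr_aux fun n => ?_).mpr (Real.hasSum_sinh (k*x))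
  rw [mul_pow]; ring

lemma ser1 (k x : ℝ) (hk : k ≠ 0) : HasSum (fun n : ℕ => ((2*n+1:ℝ)/k) * (k^(2*n+1) / (2*n+1).factorial * x^(2*n+1))) (x * cosh (k*x)) := by
  refine (hasSum_congr_aux fun n => ?_).mpr ((Real.hasSum_cosh (k*x)).mul_left x)
  rw [mul_pow, Nat.factorial_succ]
  push_cast
  field_simp
  ring

lemma ser2 (k x : ℝ) (hk : k ≠ 0) : HasSum (fun n : ℕ => ((2*n+1:ℝ)*(2*n)/k^2) * (k^(2*n+1) / (2*n+1).factorial * x^(2*n+1))) (x^2 * sinh (k*x)) := by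
  rw [← hasSum_nat_add_iff' 1]
  simp only [Finset.range_one, Finset.sum_singleton, Nat.cast_zero, mul_zero, zero_div, zero_mul,
    sub_zero]
  refine (hasSum_congr_aux fun n => ?_).mpr ((Real.hasSum_sinh (k*x)).mul_left (x^2))
  · rw [mul_pow, show 2*(n+1)+1 = (2*n+1)+1+1 by ring, Nat.factorial_succ, Nat.factorial_succ]
    push_cast
    field_simp
    ring

lemma ser3 (k x : ℝ) (hk : k ≠ 0) : HasSum (fun n : ℕ => ((2*n+1:ℝ)*(2*n)*(2*n-1)/k^3) * (k^(2*n+1) / (2*n+1).factorial * x^(2*n+1))) (x^3 * cosh (k*x)) := by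
  rw [← hasSum_nat_add_iff' 1]
  simp only [Finset.range_one, Finset.sum_singleton, Nat.cast_zero, mul_zero, zero_div, zero_mul,
    sub_zero]
  refine (hasSum_congr_aux fun n => ?_).mpr ((Real.hasSum_cosh (k*x)).mul_left (x^3))
  · rw [mul_pow, show 2*(n+1)+1 = (2*n)+1+1+1 by ring, Nat.factorial_succ, Nat.factorial_succ, Nat.factorial_succ]
    push_cast
    field_simp
    ring_nf

lemma Eser_coef (n : ℕ) : 0 ≤ 5^(2*n+1) * (3 - 14*(2*n+1:ℝ)/5 + 6*((2*n+1:ℝ)*(2*n))/25)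
    + 3^(2*n+1) * (-3 + 6 * (2*n+1:ℝ)/3+22*((2*n+1:ℝ)*(2*n))/9+16*((2*n+1:ℝ)*(2*n)*(2*n-1))/27)
    + (-6 + 8*(2*n+1:ℝ) + 48 * ((2*n+1:ℝ)*(2*n)) - 64 * ((2*n+1:ℝ)*(2*n)*(2*n-1))) := by
  rcases lt_or_ge n 6 with h | h
  · interval_cases n <;> norm_num
  · have hn : (6:ℝ) ≤ n := by exact_mod_cast h
    have h1 : 0 ≤ (3 - 14*(2*n+1:ℝ)/5 + 6*((2*n+1:ℝ)*(2*n))/25) := by nlinarith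
    have h3 : (3:ℝ)^13 ≤ 3^(2*n+1) := pow_le_pow_right₀ (by norm_num) (by omega)
    set A := (2*n+1:ℝ)*(2*n)*(2*n-1) with hA
    have hA0 : 0 ≤ A := by
      have : (0:ℝ) ≤ 2*n-1 := by linarith
      positivity
    have h2 : 16*A/27 ≤ (-3 + 6 * (2*n+1:ℝ)/3+22*((2*n+1:ℝ)*(2*n))/9+16*A/27) := by nlinarith
    have h4 : (3:ℝ)^13 * (16*A/27) ≤ 3^(2*n+1) * (-3 + 6 * (2*n+1:ℝ)/3+22*((2*n+1:ℝ)*(2*n))/9+16*A/27) := by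
      apply mul_le_mul h3 h2 <;> positivity
    have h5 : 0 ≤ 5^(2*n+1) * (3 - 14*(2*n+1:ℝ)/5 + 6*((2*n+1:ℝ)*(2*n))/25) := by positivity
    have h6 : 0 ≤ (2*n+1:ℝ)*(2*n) := by positivity
    norm_num at h4
    nlinarith

lemma E_pos (x : ℝ) (hx : 0 < x) : 0 < 3 * sinh (5*x) - 14*(x * cosh (5*x)) + 6*(x^2 * sinh (5*x))
   - 3 * sinh (3*x) + 6 * (x * cosh (3*x)) + 22 * (x^2 * sinh (3*x)) + 16 * (x^3 * cosh (3*x))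
   - 6 * sinh (1*x) + 8 * (x * cosh (1*x)) + 48 * (x^2 * sinh (1*x)) - 64 * (x^3 * cosh (1*x)) := by
  have H := ((((((((((((ser0 5 x).mul_left 3).sub ((ser1 5 x (by norm_num)).mul_left 14)).add
    ((ser2 5 x (by norm_num)).mul_left 6)).sub ((ser0 3 x).mul_left 3)).add
    ((ser1 3 x (by norm_num)).mul_left 6)).add ((ser2 3 x (by norm_num)).mul_left 22)).add
    ((ser3 3 x (by norm_num)).mul_left 16)).sub ((ser0 1 x).mul_left 6)).add
    ((ser1 1 x (by norm_num)).mul_left 8)).add ((ser2 1 x (by norm_num)).mul_left 48)).sub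
    ((ser3 1 x (by norm_num)).mul_left 64))
  refine lt_of_lt_of_le ?_ (le_hasSum H 5 ?_)
  · refine lt_of_lt_of_eq (show 0 < 86507520 / 39916800 * x^11 by positivity) ?_
    norm_num [Nat.factorial]
    ring
  · intro n _
    have h := mul_nonneg (Eser_coef n) (show 0 ≤ x^(2*n+1) / (2*n+1).factorial by positivity)
    refine h.trans (le_of_eq ?_)
    simp only [one_pow]
    ring

lemma sinh5 (x : ℝ) : sinh (5*x) = 5 * sinh x + 20 * sinh x^3 + 16 * sinh x^5 := by
  rw [show 5*x = 3*x+2*x by ring, sinh_add, sinh_two_mul, cosh_two_mul, sinh_three_mul, cosh_three_mul]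
  have := Real.cosh_sq x
  have h4 : cosh x^4 = (sinh x^2+1)^2 := by rw [← this]; ring
  ring_nf
  rw [h4, this]; ring

lemma cosh5 (x : ℝ) : cosh (5*x) = cosh x * (1 + 12 * sinh x^2 + 16 * sinh x^4) := by
  rw [show 5*x = 3*x+2*x by ring, cosh_add, sinh_two_mul, cosh_two_mul, sinh_three_mul, cosh_three_mul]
  have := Real.cosh_sq x
  have h3 : cosh x^3 = cosh x * (sinh x^2+1) := by rw [← this]; ring
  have h5 : cosh x^5 = cosh x * (sinh x^2+1)^2 := by rw [← this]; ring
  ring_nf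
  rw [h5, h3]; ring

lemma E_main (x : ℝ) (hx : 0 < x) :
   0 < 3 * (x * cosh x - sinh x) * (sinh x * cosh x - x) * (x * (sinh x^2 + cosh x^2) - sinh x * cosh x)
    - 5 * x * sinh x^2 * (cosh x * sinh x^2 - 2 * x^2 * cosh x + x * sinh x) := by
  have h := E_pos x hx
  rw [sinh5, cosh5, sinh_three_mul, cosh_three_mul, one_mul] at h
  have := Real.cosh_sq x
  have h3 : cosh x^3 = cosh x * (sinh x^2+1) := by rw [← this]; ring
  have h4 : cosh x^4 = (sinh x^2+1)^2 := by rw [← this]; ring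
  rw [h3] at h
  refine pos_of_mul_pos_right (a := 16) (lt_of_lt_of_eq h ?_) (by norm_num)
  ring_nf
  simp only [h3, h4, this]
  ring

lemma D_pos (x : ℝ) (hx : 0 < x) : 0 < sinh x * cosh x - x := by
  have h := Real.self_lt_sinh_iff.2 (show 0 < 2 * x by linarith)
  rw [Real.sinh_two_mul] at h
  linarith

lemma N_pos (x : ℝ) (hx : 0 < x) : 0 < x * (sinh x^2 + cosh x^2) - sinh x * cosh x := by
  have h := sinh_lt_mul_cosh (2 * x) (by linarith)
  rw [Real.sinh_two_mul, Real.cosh_two_mul] at h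
  linarith

lemma D_deriv (x : ℝ) : HasDerivAt (fun x : ℝ => sinh x * cosh x - x) (2 * sinh x^2) x := by
  refine HasDerivAt.congr_deriv (((Real.hasDerivAt_sinh x).mul (Real.hasDerivAt_cosh x)).sub
    (hasDerivAt_id' x)) ?_
  linear_combination Real.cosh_sq x

lemma N_deriv (x : ℝ) : HasDerivAt (fun x : ℝ => x * (sinh x^2 + cosh x^2) - sinh x * cosh x)
    (4 * x * sinh x * cosh x) x := by
  refine HasDerivAt.congr_deriv (((hasDerivAt_id' x).mul (((Real.hasDerivAt_sinh x).pow 2).add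
    ((Real.hasDerivAt_cosh x).pow 2))).sub
    ((Real.hasDerivAt_sinh x).mul (Real.hasDerivAt_cosh x))) ?_
  simp only [Pi.add_apply, Pi.pow_apply]
  ring

lemma ND_tendsto : Tendsto (fun x : ℝ => (x * (sinh x^2 + cosh x^2) - sinh x * cosh x) /
    (sinh x * cosh x - x)) (𝓝[>] 0) (𝓝 2) := by
  apply HasDerivAt.lhopital_zero_nhdsGT (f' := fun x => 4 * x * sinh x * cosh x)
    (g' := fun x => 2 * sinh x^2)
  · exact Eventually.of_forall N_deriv
  · exact Eventually.of_forall D_deriv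
  · filter_upwards [self_mem_nhdsWithin] with x hx
    have hs := Real.sinh_pos_iff.2 hx
    positivity
  · have := (N_deriv 0).continuousAt.tendsto
    simp only [sinh_zero, zero_mul, sub_zero] at this
    exact this.mono_left nhdsWithin_le_nhds
  · have := (D_deriv 0).continuousAt.tendsto
    simp only [sinh_zero, zero_mul, sub_zero] at this
    exact this.mono_left nhdsWithin_le_nhds
  · have hc : Tendsto (fun x : ℝ => cosh x) (𝓝[>] 0) (𝓝 1) := by
      have := Real.continuous_cosh.tendsto 0
      rw [cosh_zero] at this
      exact this.mono_left nhdsWithin_le_nhds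
    have h := ((hc.div tendsto_sinh_div one_ne_zero).const_mul 2)
    rw [show (2:ℝ) * (1/1) = 2 by norm_num] at h
    refine h.congr' ?_
    filter_upwards [self_mem_nhdsWithin] with x hx
    have hs := Real.sinh_pos_iff.2 hx
    have hx' : x ≠ 0 := ne_of_gt hx
    simp only [Pi.div_apply]
    field_simp
    ring

lemma G_pos : ∀ x : ℝ, 0 < x → 0 < (6/5) * log (sinh x / x)
    - (log (x * (sinh x^2 + cosh x^2) - sinh x * cosh x) - log (sinh x * cosh x - x) - log 2) := by
  apply aux_pos _ (fun x => (6/5) * (cosh x / sinh x - 1 / x) -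
    (4 * x * sinh x * cosh x / (x * (sinh x^2 + cosh x^2) - sinh x * cosh x)
     - 2 * sinh x^2 / (sinh x * cosh x - x)))
  · intro x hx
    exact ((hasDeriv_logS x hx).const_mul (6/5)).sub
      ((((N_deriv x).log (N_pos x hx).ne').sub ((D_deriv x).log (D_pos x hx).ne')).sub_const _)
  · intro x hx
    have hs := Real.sinh_pos_iff.2 hx
    have hN := N_pos x hx
    have hD := D_pos x hx
    have hE := E_main x hx
    have key : (6/5) * (cosh x / sinh x - 1 / x) -
      (4 * x * sinh x * cosh x / (x * (sinh x^2 + cosh x^2) - sinh x * cosh x)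
       - 2 * sinh x^2 / (sinh x * cosh x - x)) =
       2 * (3 * (x * cosh x - sinh x) * (sinh x * cosh x - x) * (x * (sinh x^2 + cosh x^2) - sinh x * cosh x)
    - 5 * x * sinh x^2 * (cosh x * sinh x^2 - 2 * x^2 * cosh x + x * sinh x)) /
      (5 * x * sinh x * (x * (sinh x^2 + cosh x^2) - sinh x * cosh x) * (sinh x * cosh x - x)) := by
      have h1 : cosh x * sinh x^2 - 2 * x^2 * cosh x + x * sinh x =
        2 * x * cosh x * (sinh x * cosh x - x) - sinh x * (x * (sinh x^2 + cosh x^2) - sinh x * cosh x) := by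
        linear_combination (-x * sinh x) * Real.cosh_sq x
      rw [h1]
      generalize x * (sinh x^2 + cosh x^2) - sinh x * cosh x = N at *
      generalize sinh x * cosh x - x = D at *
      field_simp
      ring
    rw [key]
    positivity
  · have h := (tendsto_logS.const_mul (6/5)).sub ((ND_tendsto.log two_ne_zero).sub_const (log 2))
    rw [show (6/5:ℝ) * 0 - (log 2 - log 2) = 0 by ring] at h
    refine h.congr' ?_
    filter_upwards [self_mem_nhdsWithin] with x hx
    rw [log_div (N_pos x hx).ne' (D_pos x hx).ne']

lemma S_gt_one (x : ℝ) (hx : 0 < x) : 1 < sinh x / x := by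
  rw [lt_div_iff₀ hx, one_mul]
  exact Real.self_lt_sinh_iff.2 hx

lemma a_pos (x : ℝ) (hx : 0 < x) : 0 < log (sinh x / x) := Real.log_pos (S_gt_one x hx)

lemma G_pos' (x : ℝ) (hx : 0 < x) :
    x * (sinh x^2 + cosh x^2) - sinh x * cosh x <
      2 * exp ((6/5) * log (sinh x / x)) * (sinh x * cosh x - x) := by
  have h := G_pos x hx
  have hN := N_pos x hx
  have hD := D_pos x hx
  rw [← exp_lt_exp] at h
  rw [exp_zero, exp_sub, exp_sub, exp_sub, exp_log hN, exp_log hD, exp_log two_pos,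
    lt_div_iff₀ (by positivity)] at h
  rw [one_mul, div_div, div_lt_iff₀ (by positivity)] at h
  linarith

lemma F_pos : ∀ x : ℝ, 0 < x → 0 < (3/5) * (log (cosh x) + log (sinh x / x))
    - log (2 * exp ((6/5) * log (sinh x / x)) - 1) := by
  have hP : ∀ x : ℝ, 0 < x → 1 < exp ((6/5) * log (sinh x / x)) := by
    intro x hx
    rw [Real.one_lt_exp_iff]
    have := a_pos x hx
    positivity
  apply aux_pos _ (fun x => (3/5) * (sinh x / cosh x + (cosh x / sinh x - 1 / x)) -
    (2 * (exp ((6/5) * log (sinh x / x)) * ((6/5) * (cosh x / sinh x - 1 / x)))) /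
      (2 * exp ((6/5) * log (sinh x / x)) - 1))
  · intro x hx
    have := hP x hx
    exact (((hasDeriv_logC x).add (hasDeriv_logS x hx)).const_mul (3/5)).sub
      (((((hasDeriv_logS x hx).const_mul (6/5)).exp.const_mul 2).sub_const 1).log
        (by linarith))
  · intro x hx
    have hs := Real.sinh_pos_iff.2 hx
    have hc := Real.cosh_pos x
    have hp := hP x hx
    have hG := G_pos' x hx
    generalize exp ((6/5) * log (sinh x / x)) = P at *
    have hp2 : 0 < 2 * P - 1 := by linarith
    have key : (3/5) * (sinh x / cosh x + (cosh x / sinh x - 1 / x)) -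
      (2 * (P * ((6/5) * (cosh x / sinh x - 1 / x)))) / (2 * P - 1) =
      3 * (2 * P * (sinh x * cosh x - x) - (x * (sinh x^2 + cosh x^2) - sinh x * cosh x)) /
        (5 * (2 * P - 1) * x * sinh x * cosh x) := by
      field_simp
      linear_combination (-6 * P * x) * Real.cosh_sq x
    rw [key]
    apply div_pos
    · linarith
    · positivity
  · have h1 : Tendsto (fun x : ℝ => 2 * exp ((6/5) * log (sinh x / x)) - 1) (𝓝[>] 0) (𝓝 1) := by
      have := (((tendsto_logS.const_mul (6/5)).rexp).const_mul 2).sub_const 1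
      rw [show (2:ℝ) * exp (6/5*0) - 1 = 1 by rw [mul_zero, exp_zero]; norm_num] at this
      exact this
    have h := ((tendsto_logC.add tendsto_logS).const_mul (3/5)).sub (h1.log one_ne_zero)
    simpa using h

/-- The function `φ(y) = 2 e^y - e^{-y}`. -/
lemma phi_mono : StrictMono (fun y : ℝ => 2 * exp y - exp (-y)) := by
  intro a b h
  have h1 := exp_lt_exp.2 h
  have h2 : exp (-b) < exp (-a) := exp_lt_exp.2 (by linarith)
  simp only
  linarith

lemma F_pos' (x : ℝ) (hx : 0 < x) :
    2 * exp ((3/5) * log (sinh x / x)) - exp (-((3/5) * log (sinh x / x))) <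
      exp ((3/5) * log (cosh x)) := by
  have h := F_pos x hx
  have ha := a_pos x hx
  generalize log (sinh x / x) = a at *
  have hp : 1 < exp (6/5*a) := by
    rw [Real.one_lt_exp_iff]; positivity
  have h2 : 2 * exp (6/5*a) - 1 < exp ((3/5) * (log (cosh x) + a)) := by
    rw [← Real.log_lt_iff_lt_exp (by linarith)]
    linarith
  rw [mul_add, exp_add] at h2
  have h3 : exp (6/5*a) = exp (3/5*a) * exp (3/5*a) := by
    rw [← exp_add]; ring_nf
  have h4 : exp (-(3/5*a)) * exp (3/5*a) = 1 := by
    rw [← exp_add]; simp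
  have h5 := exp_pos (3/5*a)
  refine lt_of_mul_lt_mul_right ?_ h5.le
  nlinarith

/-- Power-mean monotonicity step. -/
lemma phi_pow (y p : ℝ) (hy : 0 ≤ y) (hp : 1 ≤ p) :
    2 * exp (p * y) - exp (-(p * y)) ≤ (2 * exp y - exp (-y)) ^ p := by
  have hq0 := exp_pos (-(2*y))
  have hq1 : exp (-(2*y)) ≤ 1 := by
    rw [Real.exp_le_one_iff]; linarith
  have hc := (convexOn_rpow hp).2 (show exp (-(2*y)) ∈ Ici (0:ℝ) from hq0.le)
    (show 2 - exp (-(2*y)) ∈ Ici (0:ℝ) by simp; linarith)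
    (show (0:ℝ) ≤ 1/2 by norm_num) (show (0:ℝ) ≤ 1/2 by norm_num) (by norm_num)
  simp only [smul_eq_mul] at hc
  rw [show 1/2 * exp (-(2*y)) + 1/2 * (2 - exp (-(2*y))) = 1 by ring, one_rpow,
    ← Real.exp_mul] at hc
  have e1 : 2 * exp y - exp (-y) = exp y * (2 - exp (-(2*y))) := by
    rw [mul_sub, ← exp_add]; ring_nf
  have e2 : 2 * exp (p*y) - exp (-(p*y)) = exp (p*y) * (2 - exp (-(2*y)*p)) := by
    rw [mul_sub, ← exp_add]; ring_nf
  rw [e1, e2, mul_rpow (exp_pos _).le (by linarith), ← Real.exp_mul, mul_comm y p]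
  apply mul_le_mul_of_nonneg_left _ (exp_pos _).le
  linarith

lemma F_beta (β x : ℝ) (hβ : 3/5 ≤ β) (hx : 0 < x) :
    2 * exp (β * log (sinh x / x)) - exp (-(β * log (sinh x / x))) <
      exp (β * log (cosh x)) := by
  have h := F_pos' x hx
  have ha := a_pos x hx
  generalize log (sinh x / x) = a at *
  have hp : 1 ≤ β / (3/5) := by rw [le_div_iff₀ (by norm_num)]; linarith
  have h1 := phi_pow (3/5*a) (β / (3/5)) (by positivity) hp
  have e1 : β / (3/5) * (3/5*a) = β * a := by field_simp
  rw [e1] at h1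
  refine h1.trans_lt ?_
  have e2 : exp (β * log (cosh x)) = (exp (3/5 * log (cosh x))) ^ (β / (3/5)) := by
    rw [← Real.exp_mul]; congr 1; field_simp
  rw [e2]
  apply Real.rpow_lt_rpow _ h (by linarith)
  have h6 : 1 ≤ exp (3/5*a) := by rw [Real.one_le_exp_iff]; positivity
  have h7 : exp (-(3/5*a)) ≤ 1 := by rw [Real.exp_le_one_iff]; linarith
  linarith

lemma Hfun_exp (r c : ℝ) (hr : r ≠ 0) : ∃ h, Hfun r (exp c) = exp h ∧
    2 * exp (r * h) - exp (-(r * h)) = exp (r * c) := by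
  have e1 : (exp c) ^ r = exp (r*c) := by rw [← Real.exp_mul]; ring_nf
  have e2 : (exp c) ^ (2*r) = exp (r*c)^2 := by
    rw [← Real.exp_mul, ← Real.exp_nat_mul]; push_cast; ring_nf
  have hu := exp_pos (r*c)
  have hs : sqrt (8 + exp (r*c)^2) ^2 = 8 + exp (r*c)^2 := Real.sq_sqrt (by positivity)
  have hs0 := Real.sqrt_nonneg (8 + exp (r*c)^2)
  set w := (sqrt (8 + exp (r*c)^2) + exp (r*c)) / 4 with hw
  have hwp : 0 < w := by positivity
  refine ⟨log w / r, ?_, ?_⟩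
  · rw [Hfun, if_neg hr, e1, e2, ← hw, Real.rpow_def_of_pos hwp]
    ring_nf
  · rw [mul_div_cancel₀ _ hr, Real.exp_neg, exp_log hwp]
    have : 2 * w ^2 - 1 = exp (r*c) * w := by
      rw [hw]; nlinarith
    field_simp
    linarith

lemma Hfun_neg (r c : ℝ) (hr : r ≤ 0) : Hfun r (exp c) ≤ exp (c/3) := by
  rcases eq_or_lt_of_le hr with rfl | hr
  · rw [Hfun, if_pos rfl, ← Real.exp_mul]
    apply le_of_eq; ring_nf
  · obtain ⟨h, e1, e2⟩ := Hfun_exp r c hr.ne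
    rw [e1, exp_le_exp]
    have hv := exp_pos (r * (c/3))
    have e3 : exp (r*c) = exp (r * (c/3))^3 := by
      rw [← Real.exp_nat_mul]; push_cast; ring_nf
    have : 2 * exp (r*(c/3)) - exp (-(r * (c/3))) ≤ 2 * exp (r * h) - exp (-(r * h)) := by
      rw [e2, e3, Real.exp_neg]
      generalize exp (r * (c/3)) = v at *
      have : v^3 - (2 * v - v⁻¹) = (v^2-1)^2 / v := by field_simp; ring
      have h2 : 0 ≤ (v^2-1)^2 / v := by positivity
      linarith
    have := phi_mono.le_iff_le.1 this
    nlinarith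

lemma Hfun_pos_lower (r c : ℝ) (hr : 0 < r) : exp (c - log 2 / r) ≤ Hfun r (exp c) := by
  obtain ⟨h, e1, e2⟩ := Hfun_exp r c hr.ne'
  rw [e1, exp_le_exp]
  have h1 : exp (r*c) ≤ exp (log 2 + r * h) := by
    rw [exp_add, exp_log two_pos, ← e2]
    have := exp_pos (-(r*h))
    linarith
  rw [exp_le_exp] at h1
  have : c - h ≤ log 2 / r := by rw [le_div_iff₀ hr]; linarith
  linarith

lemma alpha_nec (α : ℝ) (h : ∀ x ∈ Ioi (0 : ℝ), Hfun α (cosh x) < sinh x / x) : α ≤ 0 := by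
  by_contra! hα
  have hx := exp_pos (log 2 / α)
  have h1 := h _ hx
  have h2 := Hfun_pos_lower α (log (cosh (exp (log 2 / α)))) hα
  rw [exp_log (Real.cosh_pos _), exp_sub, exp_log (Real.cosh_pos _)] at h2
  have h3 := Real.sinh_lt_cosh (exp (log 2 / α))
  have h4 := div_lt_div_of_pos_right h3 hx
  linarith

lemma c_pos (x : ℝ) (hx : 0 < x) : 0 < log (cosh x) :=
  Real.log_pos (Real.one_lt_cosh.2 hx.ne')

lemma S_lower (x : ℝ) (hx : 0 < x) : 1 + (x^2/6 + (x^2)^2/120) ≤ sinh x / x := by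
  rw [le_div_iff₀ hx]
  have h := sum_le_hasSum (Finset.range 3) (fun i _ => by positivity) (Real.hasSum_sinh x)
  simp [Finset.sum_range_succ, Nat.factorial] at h
  refine le_trans (le_of_eq ?_) h
  ring

lemma C_upper (x : ℝ) (hx : 0 < x) (hx1 : x ≤ 1) :
    cosh x ≤ 1 + (x^2/2 + (x^2)^2/24 + (x^2)^3) := by
  have h1 := (abs_le.1 (Real.exp_bound (x := x) (by rw [abs_of_pos hx]; exact hx1)
    (n := 6) (by norm_num))).2
  have h2 := (abs_le.1 (Real.exp_bound (x := -x) (by rw [abs_neg, abs_of_pos hx]; exact hx1)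
    (n := 6) (by norm_num))).2
  rw [abs_neg] at h2
  rw [abs_of_pos hx] at h1 h2
  simp [Finset.sum_range_succ, Nat.factorial] at h1 h2
  rw [Real.cosh_eq]
  have : 0 ≤ x^6 := by positivity
  nlinarith

lemma a_lower (x : ℝ) (hx : 0 < x) (hx1 : x^2 ≤ 1/24) :
    x^2/6 - (x^2)^2/180 - (x^2)^3 ≤ log (sinh x / x) := by
  have h := S_lower x hx
  have hz : 0 < x^2 := by positivity
  generalize x^2 = z at *
  have h1 : log (1 + (z/6 + z^2/120)) ≤ log (sinh x / x) :=
    Real.log_le_log (by positivity) h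
  have h2 := Real.le_log_one_add_of_nonneg (show 0 ≤ z/6 + z^2/120 by positivity)
  refine le_trans ?_ (h2.trans h1)
  set y := z/6 + z^2/120 with hy
  have hy0 : 0 < y := by positivity
  have h3 : y - y^2/2 ≤ 2 * y / (y + 2) := by
    rw [le_div_iff₀ (by positivity)]
    have : 0 ≤ y^3 := by positivity
    nlinarith
  refine le_trans ?_ h3
  have hz3 : 0 ≤ z^3 := by positivity
  have hz4 : z^4 ≤ z^3 * (1/24) := by nlinarith
  rw [hy]
  nlinarith

lemma c_upper (x : ℝ) (hx : 0 < x) (hx1 : x^2 ≤ 1/24) :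
    log (cosh x) ≤ x^2/2 - (x^2)^2/12 + 2 * (x^2)^3 := by
  have h := C_upper x hx (by nlinarith)
  have hz : 0 < x^2 := by positivity
  generalize x^2 = z at *
  rw [Real.log_le_iff_le_exp (Real.cosh_pos x)]
  refine h.trans ?_
  set w := z/2 + z^2/24 + z^3 with hw
  have hw0 : z/2 ≤ w := by
    have : 0 ≤ z^2/24 + z^3 := by positivity
    linarith
  have hz2 : z^2 ≤ z * (1/24) := by nlinarith
  have hz3 : z^3 ≤ z * (1/24) := by nlinarith
  have hw1 : w ≤ z := by linarith
  have hwpos : 0 < w := by linarith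
  have hw2 : z^2/4 ≤ w^2 := by nlinarith
  have hw3 : w^3 ≤ z^3 := pow_le_pow_left₀ hwpos.le hw1 3
  have ht : w - w^2/2 + w^3 ≤ z/2 - z^2/12 + 2 * z^3 := by linarith
  refine le_trans ?_ (exp_le_exp.2 ht)
  have ht1 : w - w^2/2 ≤ w - w^2/2 + w^3 := by
    have : 0 < w^3 := by positivity
    linarith
  have ht0 : 0 ≤ w - w^2/2 := by nlinarith
  have h5 := Real.quadratic_le_exp_of_nonneg (ht0.trans ht1)
  refine le_trans ?_ h5
  have h6 : (w - w^2/2)^2 ≤ (w - w^2/2 + w^3)^2 := pow_le_pow_left₀ ht0 ht1 2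
  have : 0 ≤ w^3 := by positivity
  have : 0 ≤ w^4 := by positivity
  nlinarith

lemma phi_lower (y : ℝ) (hy : 0 ≤ y) : 1 + 3 * y + y^2/2 ≤ 2 * exp y - exp (-y) := by
  have h := Real.quadratic_le_exp_of_nonneg hy
  have h2 : exp (-y) ≤ 1 - y + y^2/2 := by
    rw [Real.exp_neg, inv_le_iff_one_le_mul₀ (exp_pos y)]
    have h3 : 0 ≤ 1 - y + y^2/2 := by nlinarith [sq_nonneg (y-1)]
    have h4 := mul_le_mul_of_nonneg_left h h3
    have : 0 ≤ y^4 := by positivity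
    nlinarith
  linarith

lemma exp_upper (v : ℝ) (h0 : 0 ≤ v) (h1 : v ≤ 1) : exp v ≤ 1 + v + v^2/2 + v^3 := by
  have h := Real.exp_bound' h0 h1 (n := 3) (by norm_num)
  simp [Finset.sum_range_succ, Nat.factorial] at h
  have : 0 ≤ v^3 := by positivity
  linarith

lemma beta_small (β : ℝ) (h0 : 0 < β) (h1 : β < 3/5) : ∃ x, 0 < x ∧
    exp (β * log (cosh x)) ≤ 2 * exp (β * log (sinh x / x)) - exp (-(β * log (sinh x / x))) := by
  have hzpos : 0 < (1/15 - β/9)/6 := by linarith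
  refine ⟨sqrt ((1/15 - β/9)/6), Real.sqrt_pos.2 hzpos, ?_⟩
  have hx := Real.sqrt_pos.2 hzpos
  have hsq := Real.sq_sqrt hzpos.le
  have ha := a_lower _ hx (by rw [hsq]; linarith)
  have hc := c_upper _ hx (by rw [hsq]; linarith)
  rw [hsq] at ha hc
  set x := sqrt ((1/15 - β/9)/6)
  generalize hz : (1/15 - β/9)/6 = z at *
  have hz1 : z ≤ 1/90 := by linarith
  have hz2 : z^2 ≤ z * (1/90) := by nlinarith
  have hz3 : z^3 ≤ z^2 * (1/90) := by nlinarith [sq_nonneg z]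
  have hz30 : 0 < z^3 := by positivity
  set a0 := z/6 - z^2/180 - z^3 with ha0
  set c0 := z/2 - z^2/12 + 2*z^3 with hc0
  have hc0n : 0 ≤ c0 := by linarith
  have hc0u : c0 ≤ z/2 := by linarith
  have ha0l : z/6 - z^2/10 ≤ a0 := by linarith
  have ha0n : 0 ≤ z/6 - z^2/10 := by linarith
  have ha2 : z^2/36 - z^3/30 ≤ a0^2 := by
    have := pow_le_pow_left₀ ha0n ha0l 2
    nlinarith [sq_nonneg (z^2)]
  have hc2 : c0^2 ≤ z^2/4 := by
    have := pow_le_pow_left₀ hc0n hc0u 2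
    linarith
  have hc3 : c0^3 ≤ z^3/8 := by
    have := pow_le_pow_left₀ hc0n hc0u 3
    linarith
  have e1 : exp (β * log (cosh x)) ≤ exp (β * c0) := by
    rw [exp_le_exp]; exact mul_le_mul_of_nonneg_left hc h0.le
  have e2 := exp_upper (β * c0) (mul_nonneg h0.le hc0n)
    (mul_le_one₀ (by linarith) hc0n (by linarith))
  have e3 : 2 * exp (β * a0) - exp (-(β * a0)) ≤
      2 * exp (β * log (sinh x / x)) - exp (-(β * log (sinh x / x))) :=
    phi_mono.monotone (mul_le_mul_of_nonneg_left ha h0.le)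
  have e4 := phi_lower (β * a0) (mul_nonneg h0.le (ha0n.trans ha0l))
  refine e1.trans (e2.trans (le_trans ?_ (e4.trans e3)))
  have hb2 : β^2 ≤ 1 := by nlinarith
  have f1 : β^2 * c0^3 ≤ z^3/8 := by
    have h7 : 0 ≤ c0^3 := pow_nonneg hc0n 3
    exact (mul_le_of_le_one_left h7 hb2).trans hc3
  have f2 : β * c0^2 ≤ β * (z^2/4) := mul_le_mul_of_nonneg_left hc2 h0.le
  have f3 : β * (z^2/36 - z^3/30) ≤ β * a0^2 := mul_le_mul_of_nonneg_left ha2 h0.le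
  have f4 : β * z^3 ≤ z^3 := mul_le_of_le_one_left hz30.le (by linarith)
  have f5 : z^2 * (1/15 - β/9) = 6 * z^3 := by
    rw [show 1/15 - β/9 = 6 * z by linarith]; ring
  have main : 0 ≤ 3 * a0 - c0 + β * a0^2/2 - β * c0^2/2 - β^2 * c0^3 := by
    linarith
  have := mul_nonneg h0.le main
  linarith

theorem Hfun_sinh_bounds (α β : ℝ) :
    (∀ x ∈ Ioi (0 : ℝ),
        Hfun α (cosh x) < sinh x / x ∧ sinh x / x < Hfun β (cosh x)) ↔
      (α ≤ 0 ∧ β ≥ 3 / 5) := by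
  have hneg : ∀ r x : ℝ, r ≤ 0 → 0 < x → Hfun r (cosh x) < sinh x / x := by
    intro r x hr hx
    have hS : 0 < sinh x / x := zero_lt_one.trans (S_gt_one x hx)
    have h1 := Hfun_neg r (log (cosh x)) hr
    rw [exp_log (Real.cosh_pos x)] at h1
    refine h1.trans_lt ?_
    rw [← Real.lt_log_iff_exp_lt hS]
    have := lazarevic x hx
    linarith
  constructor
  · intro h
    refine ⟨alpha_nec α (fun x hx => (h x hx).1), ?_⟩
    by_contra! hβ
    rcases le_or_gt β 0 with h0 | h0
    · exact lt_asymm (hneg β 1 h0 one_pos) (h 1 (by simp)).2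
    · obtain ⟨x, hx, hle⟩ := beta_small β h0 hβ
      have hS : 0 < sinh x / x := zero_lt_one.trans (S_gt_one x hx)
      have h2 := (h x hx).2
      obtain ⟨y, e1, e2⟩ := Hfun_exp β (log (cosh x)) h0.ne'
      rw [exp_log (Real.cosh_pos x)] at e1
      rw [e1, ← Real.log_lt_iff_lt_exp hS] at h2
      rw [← e2] at hle
      have h3 := phi_mono.le_iff_le.1 hle
      have := le_of_mul_le_mul_left h3 h0
      linarith
  · rintro ⟨hα, hβ⟩ x hx
    have hx : 0 < x := hx
    refine ⟨hneg α x hα hx, ?_⟩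
    have h0 : 0 < β := by linarith
    have hS : 0 < sinh x / x := zero_lt_one.trans (S_gt_one x hx)
    obtain ⟨y, e1, e2⟩ := Hfun_exp β (log (cosh x)) h0.ne'
    rw [exp_log (Real.cosh_pos x)] at e1
    rw [e1, ← Real.log_lt_iff_lt_exp hS]
    have h1 := F_beta β x hβ hx
    rw [← e2] at h1
    exact lt_of_mul_lt_mul_left (phi_mono.lt_iff_lt.1 h1) h0.le
end

section
/- Let p be a nonzero real number. The chain of inequalities (sin(x)/x)^(2p) + (tan(x)/x)^p > (x/sin(x))^(2p) + (x/tan(x))^p > 2 holds for every x ∈ (0, π/2) if and only if p ≥ (ln 2)/(2(ln π − ln 2)). -/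
open Real Set

lemma aux_nonneg (f f' : ℝ → ℝ) (hf : ∀ x, HasDerivAt f (f' x) x) (h0 : f 0 = 0)
    (h : ∀ x, 0 ≤ x → 0 ≤ f' x) (x : ℝ) (hx : 0 ≤ x) : 0 ≤ f x := by
  have hm : MonotoneOn f (Ici 0) := by
    apply monotoneOn_of_deriv_nonneg (convex_Ici 0)
    · exact fun y _ => (hf y).continuousAt.continuousWithinAt
    · exact fun y _ => (hf y).differentiableAt.differentiableWithinAt
    · intro y hy
      rw [interior_Ici] at hy
      rw [(hf y).deriv]
      exact h y (le_of_lt hy)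
  have := hm (mem_Ici.2 le_rfl) (mem_Ici.2 hx) hx
  rwa [h0] at this

lemma sin_lower (x : ℝ) (hx : 0 ≤ x) : x - x^3/6 ≤ sin x := by
  have := aux_nonneg (fun x => sin x - (x - x^3/6)) (fun x => cos x - (1 - x^2/2))
    (fun x => by
      refine HasDerivAt.congr_deriv ((hasDerivAt_sin x).sub ((hasDerivAt_id' x).sub ((hasDerivAt_pow 3 x).div_const 6))) ?_
      norm_num <;> ring) (by simp)
    (fun x _ => by linarith [one_sub_sq_div_two_le_cos (x := x)]) x hx
  linarith

lemma cos_upper (x : ℝ) (hx : 0 ≤ x) : cos x ≤ 1 - x^2/2 + x^4/24 := by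
  have := aux_nonneg (fun x => (1 - x^2/2 + x^4/24) - cos x) (fun x => sin x - (x - x^3/6))
    (fun x => by
      refine HasDerivAt.congr_deriv (((((hasDerivAt_pow 2 x).div_const 2).const_sub 1).add
        ((hasDerivAt_pow 4 x).div_const 24)).sub (hasDerivAt_cos x)) ?_
      norm_num <;> ring) (by simp)
    (fun x hx => by linarith [sin_lower x hx]) x hx
  linarith

lemma sin_upper (x : ℝ) (hx : 0 ≤ x) : sin x ≤ x - x^3/6 + x^5/120 := by
  have := aux_nonneg (fun x => (x - x^3/6 + x^5/120) - sin x) (fun x => (1 - x^2/2 + x^4/24) - cos x)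
    (fun x => by
      refine HasDerivAt.congr_deriv ((((hasDerivAt_id' x).sub ((hasDerivAt_pow 3 x).div_const 6)).add
        ((hasDerivAt_pow 5 x).div_const 120)).sub (hasDerivAt_sin x)) ?_
      norm_num <;> ring) (by simp)
    (fun x hx => by linarith [cos_upper x hx]) x hx
  linarith

lemma cos_lower (x : ℝ) (hx : 0 ≤ x) : 1 - x^2/2 + x^4/24 - x^6/720 ≤ cos x := by
  have := aux_nonneg (fun x => cos x - (1 - x^2/2 + x^4/24 - x^6/720))
    (fun x => (x - x^3/6 + x^5/120) - sin x)
    (fun x => by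
      refine HasDerivAt.congr_deriv ((hasDerivAt_cos x).sub (((((hasDerivAt_pow 2 x).div_const 2).const_sub 1).add
        ((hasDerivAt_pow 4 x).div_const 24)).sub ((hasDerivAt_pow 6 x).div_const 720))) ?_
      norm_num <;> ring) (by simp)
    (fun x hx => by linarith [sin_upper x hx]) x hx
  linarith

lemma poly1 (z : ℝ) (h0 : 0 < z) (h1 : z ≤ 21/10) :
    (1 + z/4 + 3*z^2/80 + z^3/160)^2 * (1 - z/6 + z^2/120)^3 < 1 := by
  have h : 1 - (1 + z/4 + 3*z^2/80 + z^3/160)^2 * (1 - z/6 + z^2/120)^3 = z^2 * ((125000000/50039642934603) * (21/10 - z)^10 +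
      (3050000000/150118928803809) * z^1 * (21/10 - z)^9 +
      (3760046875/50039642934603) * z^2 * (21/10 - z)^8 +
      (33673896875/200158571738412) * z^3 * (21/10 - z)^7 +
      (6501218125/25416961490592) * z^4 * (21/10 - z)^6 +
      (63885322525/228752653415328) * z^5 * (21/10 - z)^5 +
      (1634830355119/7320084909290496) * z^6 * (21/10 - z)^4 +
      (132217700623367/1024811887300669440) * z^7 * (21/10 - z)^3 +
      (10468084130985169/204962377460133888000) * z^8 * (21/10 - z)^2 +
      (791146754151359/64050742956291840000) * z^9 * (21/10 - z)^1 +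
      (336578543288369693/245954852952160665600000) * z^10) := by ring
  have h2 : 0 ≤ 21/10 - z := by linarith
  have : 0 < 1 - (1 + z/4 + 3*z^2/80 + z^3/160)^2 * (1 - z/6 + z^2/120)^3 := by
    rw [h]; positivity
  linarith

lemma poly2 (z : ℝ) (h0 : 0 < z) (h1 : z ≤ 21/10) :
    (2 - (1 + z/4 + 3*z^2/80 + z^3/160))^4 * (1 - z/6 + z^2/120)^3 <
      (1 - z/2 + z^2/24 - z^3/720)^3 := by
  have h : (1 - z/2 + z^2/24 - z^3/720)^3 -
      (2 - (1 + z/4 + 3*z^2/80 + z^3/160))^4 * (1 - z/6 + z^2/120)^3 = z^2 * ((1250000000000000/4291706070725955984963) * (21/10 - z)^16 +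
      (51425000000000000/12875118212177867954889) * z^1 * (21/10 - z)^15 +
      (108701421875000000/4291706070725955984963) * z^2 * (21/10 - z)^14 +
      (60372589843750000/613100867246565140709) * z^3 * (21/10 - z)^13 +
      (482451888601562500/1839302601739695422127) * z^4 * (21/10 - z)^12 +
      (310626365809765625/613100867246565140709) * z^5 * (21/10 - z)^11 +
      (28734246001930296875/39238455503780169005376) * z^6 * (21/10 - z)^10 +
      (2654964844277149503125/3296030262317534196451584) * z^7 * (21/10 - z)^9 +
      (1988904046493990581625/2929804677615585952401408) * z^8 * (21/10 - z)^8 +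
      (3846682438950937132075/8789414032846757857204224) * z^9 * (21/10 - z)^7 +
      (25766340161356397084057/120540535307612679184515072) * z^10 * (21/10 - z)^6 +
      (62374656396674752370533/803603568717417861230100480) * z^11 * (21/10 - z)^5 +
      (3266042622726235725332473/160720713743483572246020096000) * z^12 * (21/10 - z)^4 +
      (4409286293195731979057419/1205405353076126791845150720000) * z^13 * (21/10 - z)^3 +
      (47286689214120238451583041/112504499620438500572214067200000) * z^14 * (21/10 - z)^2 +
      (122325188315792435916208781/4500179984817540022888562688000000) * z^15 * (21/10 - z)^1 +
      (398684479265685153115112813/540021598178104802746627522560000000) * z^16) := by ring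
  have h2 : 0 ≤ 21/10 - z := by linarith
  have : 0 < (1 - z/2 + z^2/24 - z^3/720)^3 -
      (2 - (1 + z/4 + 3*z^2/80 + z^3/160))^4 * (1 - z/6 + z^2/120)^3 := by
    rw [h]; positivity
  linarith

/-- Raising the exponent preserves the second inequality. -/
lemma raise_exp (u w q p : ℝ) (hu : 0 < u) (hw : 0 < w) (hq : 0 < q) (hqp : q ≤ p)
    (h : 2 < u^(2*q) + w^q) : 2 < u^(2*p) + w^p := by
  have hr : 1 ≤ p/q := by rw [le_div_iff₀ hq]; linarith
  have e1 : u^(2*p) = (1 + (u^(2*q) - 1))^(p/q) := by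
    rw [add_sub_cancel, ← rpow_mul hu.le]; congr 1; field_simp
  have e2 : w^p = (1 + (w^q - 1))^(p/q) := by
    rw [add_sub_cancel, ← rpow_mul hw.le]; congr 1; field_simp
  have b1 := one_add_mul_self_le_rpow_one_add (s := u^(2*q) - 1)
    (by linarith [rpow_pos_of_pos hu (2*q)]) hr
  have b2 := one_add_mul_self_le_rpow_one_add (s := w^q - 1)
    (by linarith [rpow_pos_of_pos hw q]) hr
  rw [e1, e2]
  have : 0 < (p/q) * (u^(2*q) + w^q - 2) := mul_pos (by linarith) (by linarith)
  nlinarith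

lemma tan_form (x : ℝ) : x / tan x = x / sin x * cos x := by
  rw [tan_eq_sin_div_cos, div_div_eq_mul_div]; ring

lemma small_case (x : ℝ) (h0 : 0 < x) (h1 : x^2 ≤ 21/10) (hx : x < π/2) :
    2 < (x / sin x)^(2*(3/4:ℝ)) + (x / tan x)^(3/4:ℝ) := by
  have hs : 0 < sin x := sin_pos_of_pos_of_lt_pi h0 (by linarith [pi_pos])
  have hc : 0 < cos x := cos_pos_of_mem_Ioo ⟨by linarith, hx⟩
  rw [tan_form]
  set t := x / sin x with ht
  have htp : 0 < t := div_pos h0 hs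
  set z := x^2 with hz
  have hz0 : 0 < z := by positivity
  have p1 := poly1 z hz0 h1
  have p2 := poly2 z hz0 h1
  have hS : 0 < 1 - z/6 + z^2/120 := by nlinarith
  have htS : 1 ≤ t * (1 - z/6 + z^2/120) := by
    rw [ht, div_mul_eq_mul_div, le_div_iff₀ hs, hz]
    linarith [sin_upper x h0.le]
  have htS3 : 1 ≤ t^3 * (1 - z/6 + z^2/120)^3 := by
    rw [← mul_pow]; exact one_le_pow₀ htS
  have hcC : 1 - z/2 + z^2/24 - z^3/720 ≤ cos x := by
    rw [hz]; linarith [cos_lower x h0.le]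
  have hcC3 : (1 - z/2 + z^2/24 - z^3/720)^3 ≤ cos x^3 :=
    (Odd.strictMono_pow (by decide)).monotone hcC
  set S := (1 - z/6 + z^2/120)^3 with hS3
  have hS3p : 0 < S := by positivity
  set P := 1 + z/4 + 3*z^2/80 + z^3/160 with hP
  have hPp : 0 < P := by positivity
  clear_value S P
  have a1 : P ≤ t^(2*(3/4:ℝ)) := by
    have e : (t^(2*(3/4:ℝ)))^2 = t^3 := by
      rw [← rpow_natCast, ← rpow_mul htp.le, ← rpow_natCast]; norm_num
    apply le_of_pow_le_pow_left₀ (n := 2) (by norm_num) (by positivity)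
    rw [e]
    exact le_of_mul_le_mul_right (p1.le.trans htS3) hS3p
  have a2 : 2 - P < (t * cos x)^(3/4:ℝ) := by
    have e : ((t * cos x)^(3/4:ℝ))^4 = (t * cos x)^3 := by
      rw [← rpow_natCast, ← rpow_mul (by positivity), ← rpow_natCast]; norm_num
    by_contra hcon
    push Not at hcon
    have := pow_le_pow_left₀ (by positivity) hcon 4
    rw [e, mul_pow] at this
    have h5 : t^3 * cos x^3 * S ≤ (2-P)^4 * S := mul_le_mul_of_nonneg_right this hS3p.le
    have h6 : cos x^3 ≤ t^3 * cos x^3 * S := by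
      have : 0 < cos x^3 := by positivity
      have := mul_le_mul_of_nonneg_left htS3 this.le
      linarith
    linarith
  linarith

lemma large_case (p x : ℝ) (hp1 : 3/4 ≤ p) (hp2 : p ≤ 7/9) (hpp : (π/2)^(2*p) = 2)
    (h0 : 0 < x) (h1 : 21/10 ≤ x^2) (hx : x < π/2) :
    2 < (x / sin x)^(2*p) + (x / tan x)^p := by
  have hs : 0 < sin x := sin_pos_of_pos_of_lt_pi h0 (by linarith [pi_pos])
  have hpi := pi_gt_d4
  have hpi2 := pi_lt_d4
  have hxl : 1.449 ≤ x := by nlinarith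
  obtain ⟨y, hy⟩ : ∃ y, y = π/2 - x := ⟨_, rfl⟩
  have hy0 : 0 < y := by linarith
  have hy1 : y ≤ 0.1219 := by linarith
  have a1 : 2 * (1 + 2*p*(-(2*y/π))) ≤ (x / sin x)^(2*p) := by
    have b := one_add_mul_self_le_rpow_one_add (s := -(2*y/π)) (p := 2*p)
      (by rw [neg_le_neg_iff, div_le_one pi_pos]; linarith) (by linarith)
    have e : x^(2*p) = 2 * (1 + -(2*y/π))^(2*p) := by
      nth_rewrite 2 [← hpp]
      rw [← mul_rpow (by positivity)]
      · congr 1; rw [hy]; field_simp; ring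
      · rw [← sub_eq_add_neg, sub_nonneg, div_le_one pi_pos]; linarith
    have m : x^(2*p) ≤ (x / sin x)^(2*p) := by
      apply rpow_le_rpow h0.le _ (by linarith)
      rw [le_div_iff₀ hs]; nlinarith [sin_le_one x]
    linarith
  have a2 : 2*y < (x / tan x)^p := by
    have ht : x * y < x / tan x := by
      have : tan x = (tan y)⁻¹ := by rw [hy, tan_pi_div_two_sub, inv_inv]
      rw [this, div_inv_eq_mul]
      exact mul_lt_mul_of_pos_left (lt_tan hy0 (by linarith)) h0
    have hxy : 0 < x*y := by positivity
    have m1 : (x*y)^p < (x / tan x)^p := rpow_lt_rpow hxy.le ht (by linarith)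
    have m2 : (x*y)^(4/5:ℝ) ≤ (x*y)^p :=
      rpow_le_rpow_of_exponent_ge hxy (by nlinarith) (by linarith)
    have m3 : 2*y ≤ (x*y)^(4/5:ℝ) := by
      have e : ((x*y)^(4/5:ℝ))^5 = (x*y)^4 := by
        rw [← rpow_natCast, ← rpow_mul hxy.le, ← rpow_natCast]; norm_num
      apply le_of_pow_le_pow_left₀ (n := 5) (by norm_num) (by positivity)
      rw [e]
      have : 32 * y ≤ x^4 := by nlinarith
      have := mul_le_mul_of_nonneg_right this (by positivity : 0 ≤ y^4)
      nlinarith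
    linarith
  have a3 : 8*p*y/π ≤ 2*y := by
    rw [div_le_iff₀ pi_pos]; nlinarith
  have : 2 * (1 + 2*p*(-(2*y/π))) = 2 - 8*p*y/π := by ring
  linarith

lemma sin_cube (x : ℝ) (h0 : 0 < x) (hx : x < π/2) : x^3 * cos x < sin x^3 := by
  have hpi2 := pi_lt_d4
  have h := cos_upper x h0.le
  have h2 := sin_lower x h0.le
  have h3 : 0 ≤ x - x^3/6 := by
    have : x - x^3/6 = x * (1 - x^2/6) := by ring
    rw [this]; apply mul_nonneg h0.le; nlinarith
  have h4 := pow_le_pow_left₀ h3 h2 3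
  have h5 : x^3 * cos x ≤ x^3 * (1 - x^2/2 + x^4/24) := mul_le_mul_of_nonneg_left h (by positivity)
  have h6 : (x - x^3/6)^3 - x^3 * (1 - x^2/2 + x^4/24) = x^7 * (1/24 - x^2/216) := by ring
  have h7 : 0 < x^7 * (1/24 - x^2/216) := by
    apply mul_pos (by positivity); nlinarith
  linarith

/-- Product quantity governing the first inequality. -/
lemma first_iff (p x : ℝ) (h0 : 0 < x) (hx : x < π/2) :
    (sin x / x) ^ (2 * p) + (tan x / x) ^ p > (x / sin x) ^ (2 * p) + (x / tan x) ^ p ↔ 0 < p := by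
  have hs : 0 < sin x := sin_pos_of_pos_of_lt_pi h0 (by linarith [pi_pos])
  have hc : 0 < cos x := cos_pos_of_mem_Ioo ⟨by linarith, hx⟩
  have htan : 0 < tan x := tan_pos_of_pos_of_lt_pi_div_two h0 hx
  have e1 : (x / sin x)^(2*p) = ((sin x / x)^(2*p))⁻¹ := by
    rw [← inv_rpow (by positivity), inv_div]
  have e2 : (x / tan x)^p = ((tan x / x)^p)⁻¹ := by
    rw [← inv_rpow (by positivity), inv_div]
  have hB : 1 < (sin x / x)^2 * (tan x / x) := by
    rw [tan_eq_sin_div_cos, div_pow, div_div, div_mul_div_comm, one_lt_div (by positivity)]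
    nlinarith [sin_cube x h0 hx]
  have e3 : (sin x / x)^(2*p) * (tan x / x)^p = ((sin x / x)^2 * (tan x / x))^p := by
    rw [mul_rpow (by positivity) (by positivity), rpow_mul (by positivity)]
    norm_num
  have hu : 0 < (sin x / x)^(2*p) := by positivity
  have hv : 0 < (tan x / x)^p := by positivity
  rw [e1, e2]
  set u := (sin x / x)^(2*p)
  set v := (tan x / x)^p
  have e4 : u⁻¹ + v⁻¹ = (u + v) / (u * v) := by field_simp; ring
  rw [gt_iff_lt, e4, div_lt_iff₀ (by positivity), lt_mul_iff_one_lt_right (by positivity), e3,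
    one_lt_rpow_iff_of_pos (by linarith)]
  constructor
  · rintro (h | h)
    · exact h.2
    · linarith [h.1]
  · exact fun h => Or.inl ⟨hB, h⟩

theorem wilker_chain_zhu_trig (p : ℝ) (hp : p ≠ 0) :
    (∀ x ∈ Ioo (0 : ℝ) (π / 2),
        (sin x / x) ^ (2 * p) + (tan x / x) ^ p >
          (x / sin x) ^ (2 * p) + (x / tan x) ^ p ∧
        (x / sin x) ^ (2 * p) + (x / tan x) ^ p > 2) ↔
      p ≥ Real.log 2 / (2 * (Real.log π - Real.log 2)) := by
  have hpi := pi_gt_d4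
  have hpi2 := pi_lt_d4
  have hpos : (0:ℝ) < π/2 := by positivity
  have hl : Real.log π - Real.log 2 = Real.log (π/2) := by
    rw [Real.log_div (by positivity) (by norm_num)]
  have hlp : 0 < Real.log (π/2) := Real.log_pos (by linarith)
  rw [hl]
  constructor
  · intro h
    have hp0 : 0 < p := (first_iff p 1 (by norm_num) (by linarith)).1 (h 1 ⟨by norm_num, by linarith⟩).1
    have hcont : ContinuousAt (fun x : ℝ => (x / sin x)^(2*p) + (x / sin x * cos x)^p) (π/2) := by
      have hd : ContinuousAt (fun x : ℝ => x / sin x) (π/2) :=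
        continuousAt_id.div continuous_sin.continuousAt (by simp)
      exact (hd.rpow_const (Or.inr (by linarith))).add
        ((hd.mul continuous_cos.continuousAt).rpow_const (Or.inr hp0.le))
    have hlim := hcont.tendsto.mono_left (nhdsWithin_le_nhds (s := Iio (π/2)))
    have h2 : 2 ≤ (π/2 / sin (π/2))^(2*p) + (π/2 / sin (π/2) * cos (π/2))^p := by
      apply ge_of_tendsto hlim
      filter_upwards [Ioo_mem_nhdsLT hpos] with x hx
      have := (h x hx).2
      rw [tan_form] at this
      exact this.le
    simp only [sin_pi_div_two, cos_pi_div_two, div_one, mul_zero, zero_rpow hp, add_zero] at h2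
    have h3 := Real.log_le_log (by norm_num) h2
    rw [Real.log_rpow hpos] at h3
    rw [ge_iff_le, div_le_iff₀ (by positivity)]
    linarith
  · intro h x hx
    set q := Real.log 2 / (2 * Real.log (π/2)) with hq
    have hqe : 2 * q * Real.log (π/2) = Real.log 2 := by rw [hq]; field_simp
    have hq1 : 3/4 ≤ q := by
      rw [hq, le_div_iff₀ (by positivity)]
      have := Real.log_le_log (x := (π/2)^3) (y := 2^2) (by positivity) (by
        have : π/2 ≤ 1.5708 := by linarith
        calc (π/2)^3 ≤ 1.5708^3 := by gcongr
          _ ≤ 2^2 := by norm_num)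
      rw [Real.log_pow, Real.log_pow] at this
      push_cast at this
      linarith
    have hq2 : q ≤ 7/9 := by
      rw [hq, div_le_iff₀ (by positivity)]
      have := Real.log_le_log (x := 2^9) (y := (π/2)^14) (by positivity) (by
        have : 1.57 ≤ π/2 := by linarith
        calc (2:ℝ)^9 ≤ 1.57^14 := by norm_num
          _ ≤ (π/2)^14 := by gcongr)
      rw [Real.log_pow, Real.log_pow] at this
      push_cast at this
      linarith
    have hqq : (π/2)^(2*q) = 2 := by
      rw [rpow_def_of_pos hpos, mul_comm, hqe, Real.exp_log (by norm_num)]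
    have hs : 0 < sin x := sin_pos_of_pos_of_lt_pi hx.1 (by linarith [hx.2])
    have htan : 0 < tan x := tan_pos_of_pos_of_lt_pi_div_two hx.1 hx.2
    refine ⟨(first_iff p x hx.1 hx.2).2 (by linarith), ?_⟩
    rcases le_total (x^2) (21/10) with h1 | h1
    · exact raise_exp _ _ (3/4) p (div_pos hx.1 hs) (div_pos hx.1 htan) (by norm_num) (by linarith)
        (small_case x hx.1 h1 hx.2)
    · exact raise_exp _ _ q p (div_pos hx.1 hs) (div_pos hx.1 htan) (by linarith) h
        (large_case q x hq1 hq2 hqq hx.1 h1 hx.2)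
end
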